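/- arXiv:2511.05287 — 5 statements merged into one kernel-verified Lean document; each statement's English description precedes it below -/
import Mathlib

section
/- Let R be a unique factorization domain, f an algebraically primitive Dirichlet polynomial over R with min-degree m and degree n (m < n, a_m = f(m) ≠ 0, a_n = f(n) ≠ 0), write a_i = f(i), and let p and q be prime elements of R. Assume there exist two different indices j₁, j₂ ∈ {m+1,…,n−1} with j₁·j₂ ≠ m·n such that: (i) p ∣ a_i for every i with m ≤ i ≤ n and i ≠ j₁, p ∤ a_{j₁}, p² ∤ a_m and p² ∤ a_n; (ii) q ∣ a_i for every i with m ≤ i ≤ n and i ≠ j₂, q ∤ a_{j₂}, q² ∤ a_m and q² ∤ a_n. Then f is irreducible over R. -/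
/-!
Suppose `f = g * h` with `g`, `h` nonconstant, of min-degrees `m₁`, `m₂` and degrees `n₁`, `n₂`.
As `R` is a domain, `m = m₁ m₂`, `n = n₁ n₂`, `f m = g m₁ * h m₂` and `f n = g n₁ * h n₂`.
Algebraic primitivity forces `m₁ ≠ n₁` and `m₂ ≠ n₂`: if, say, `g` were supported at a single
index `m₁ ≥ 2`, then `m₁` would divide the whole support of `f`.

Modulo `p` the product `g * h` is a nonzero monomial at index `j₁`. Since `R / (p)` is a domain,
`g` and `h` are monomials modulo `p`, at indices `k`, `l` with `k l = j₁`. As `p ^ 2 ∤ f m`, one of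
`g m₁`, `h m₂` is not divisible by `p`, so `k = m₁` or `l = m₂`; likewise `k = n₁` or `l = n₂`.
Hence `j₁ ∈ {m₁ n₂, n₁ m₂}` (`index_eq_cross`). The same holds for `j₂` by means of `q`,
and `j₁ ≠ j₂` then gives `j₁ j₂ = m₁ n₂ n₁ m₂ = m n`, which is excluded.

Extreme indices are taken relative to a prime ideal `I`, so that `I = ⊥` covers ordinary supports
and `I = (p)` covers supports modulo `p`.
-/

namespace DirichletPoly

variable {R : Type*}

/-- A Dirichlet polynomial is an arithmetic function with finite support. -/
def IsDP [Zero R] (f : ArithmeticFunction R) : Prop := (Function.support ⇑f).Finite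

/-- `f` is nonconstant: its support contains some `i ≥ 2`. -/
def Nonconst [Zero R] (f : ArithmeticFunction R) : Prop := ∃ i : ℕ, 2 ≤ i ∧ f i ≠ 0

/-- `f` is irreducible over `R`: it cannot be written as a product of two nonconstant
Dirichlet polynomials with coefficients in `R`. -/
def IrreducibleDP [CommSemiring R] (f : ArithmeticFunction R) : Prop :=
  ¬ ∃ g h : ArithmeticFunction R, IsDP g ∧ IsDP h ∧ Nonconst g ∧ Nonconst h ∧ f = g * h

/-- `f` is algebraically primitive: the gcd of the elements of its support is `1`. -/
def AlgPrimitive [Zero R] (f : ArithmeticFunction R) : Prop :=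
  ∀ d : ℕ, (∀ i : ℕ, f i ≠ 0 → d ∣ i) → d = 1

/-- `k` and `K` are the least and greatest indices at which `g` is nonzero modulo `I`. -/
def Extremes [CommRing R] (I : Ideal R) (g : ArithmeticFunction R) (k K : ℕ) : Prop :=
  g k ∉ I ∧ g K ∉ I ∧ ∀ i, g i ∉ I → k ≤ i ∧ i ≤ K

theorem exists_extremes [CommRing R] (I : Ideal R) {g : ArithmeticFunction R} (hg : IsDP g)
    {a : ℕ} (ha : g a ∉ I) : ∃ k K, Extremes I g k K := by
  classical
  have hfin : {i | g i ∉ I}.Finite := by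
    refine hg.subset fun i hi => ?_
    simp only [Function.mem_support]
    intro h0
    exact hi (h0 ▸ I.zero_mem)
  have hne : hfin.toFinset.Nonempty := ⟨a, by simpa using ha⟩
  refine ⟨hfin.toFinset.min' hne, hfin.toFinset.max' hne, ?_, ?_, fun i hi => ⟨?_, ?_⟩⟩
  · simpa using hfin.toFinset.min'_mem hne
  · simpa using hfin.toFinset.max'_mem hne
  · exact Finset.min'_le _ _ (by simpa using hi)
  · exact Finset.le_max' _ _ (by simpa using hi)

theorem Extremes.pos [CommRing R] {I : Ideal R} {g : ArithmeticFunction R} {k K : ℕ}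
    (h : Extremes I g k K) : 0 < k := by
  rcases Nat.eq_zero_or_pos k with rfl | hk
  · exact absurd (by simp) h.1
  · exact hk

theorem Extremes.le [CommRing R] {I : Ideal R} {g : ArithmeticFunction R} {k K : ℕ}
    (h : Extremes I g k K) : k ≤ K := (h.2.2 k h.1).2

theorem exists_factor_notMem [CommRing R] {I : Ideal R} {g h : ArithmeticFunction R} {i : ℕ}
    (hi : (g * h) i ∉ I) : ∃ a b, a * b = i ∧ g a ∉ I ∧ h b ∉ I := by
  by_contra! hcon
  refine hi ?_
  rw [ArithmeticFunction.mul_apply]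
  refine I.sum_mem fun x hx => ?_
  by_cases hgx : g x.1 ∈ I
  · exact I.mul_mem_right _ hgx
  · exact I.mul_mem_left _ (hcon _ _ (Nat.mem_divisorsAntidiagonal.1 hx).1 hgx)

/-- A coefficient of a product is a single term modulo `I` when `(k, l)` is the only factorization
of `k * l` that contributes. -/
theorem mul_apply_sub_mem [CommRing R] {I : Ideal R} {g h : ArithmeticFunction R} {k l : ℕ}
    (hk : 0 < k) (hl : 0 < l)
    (huniq : ∀ a b, a * b = k * l → g a ∉ I → h b ∉ I → a = k ∧ b = l) :
    (g * h) (k * l) - g k * h l ∈ I := by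
  have hmem : (k, l) ∈ (k * l).divisorsAntidiagonal := by
    simp [Nat.mem_divisorsAntidiagonal, hk.ne', hl.ne']
  rw [ArithmeticFunction.mul_apply, ← Finset.add_sum_erase _ _ hmem, add_sub_cancel_left]
  refine I.sum_mem fun x hx => ?_
  obtain ⟨hne, hx⟩ := Finset.mem_erase.1 hx
  by_cases hgx : g x.1 ∈ I
  · exact I.mul_mem_right _ hgx
  · refine I.mul_mem_left _ ?_
    by_contra hhx
    obtain ⟨h1, h2⟩ := huniq _ _ (Nat.mem_divisorsAntidiagonal.1 hx).1 hgx hhx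
    exact hne (Prod.ext h1 h2)

theorem eq_and_eq_of_mul_eq {a b k l : ℕ} (hk : 0 < k) (hl : 0 < l) (hka : k ≤ a) (hlb : l ≤ b)
    (hab : a * b = k * l) : a = k ∧ b = l := by
  constructor <;> nlinarith [Nat.mul_le_mul hka hlb]

section Products

variable [CommRing R] {I : Ideal R} {g h : ArithmeticFunction R} {k K l L : ℕ}

theorem mul_apply_min_sub_mem (hg : Extremes I g k K) (hh : Extremes I h l L) :
    (g * h) (k * l) - g k * h l ∈ I :=
  mul_apply_sub_mem hg.pos hh.pos fun a b hab ha hb =>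
    eq_and_eq_of_mul_eq hg.pos hh.pos (hg.2.2 a ha).1 (hh.2.2 b hb).1 hab

theorem mul_apply_max_sub_mem (hg : Extremes I g k K) (hh : Extremes I h l L) :
    (g * h) (K * L) - g K * h L ∈ I := by
  refine mul_apply_sub_mem (hg.pos.trans_le hg.le) (hh.pos.trans_le hh.le) fun a b hab ha hb => ?_
  have h1 := hg.2.2 a ha
  have h2 := hh.2.2 b hb
  obtain ⟨e1, e2⟩ := eq_and_eq_of_mul_eq (hg.pos.trans_le h1.1) (hh.pos.trans_le h2.1)
    h1.2 h2.2 hab.symm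
  exact ⟨e1.symm, e2.symm⟩

/-- As `R / I` is a domain, min-degrees and degrees modulo `I` are multiplicative. -/
theorem Extremes.mul (hI : I.IsPrime) (hg : Extremes I g k K) (hh : Extremes I h l L) :
    Extremes I (g * h) (k * l) (K * L) := by
  refine ⟨fun hc => ?_, fun hc => ?_, fun i hi => ?_⟩
  · have := (I.sub_mem_iff_right hc).1 (mul_apply_min_sub_mem hg hh)
    exact (hI.mem_or_mem this).elim hg.1 hh.1
  · have := (I.sub_mem_iff_right hc).1 (mul_apply_max_sub_mem hg hh)
    exact (hI.mem_or_mem this).elim hg.2.1 hh.2.1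
  · obtain ⟨a, b, rfl, ha, hb⟩ := exists_factor_notMem hi
    exact ⟨Nat.mul_le_mul (hg.2.2 a ha).1 (hh.2.2 b hb).1,
      Nat.mul_le_mul (hg.2.2 a ha).2 (hh.2.2 b hb).2⟩

end Products

/-- If `g * h` is a nonzero monomial modulo `p` at index `j`, and `p ^ 2` divides neither
`g m₁ * h m₂` nor `g n₁ * h n₂`, then `j` is one of the cross products `m₁ * n₂`, `n₁ * m₂`. It is
applied with `m₁`, `m₂` the min-degrees and `n₁`, `n₂` the degrees of `g`, `h`. -/
theorem index_eq_cross [CommRing R] {g h : ArithmeticFunction R} (hgfin : IsDP g)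
    (hhfin : IsDP h) {m₁ n₁ m₂ n₂ : ℕ} (hmn₁ : m₁ ≠ n₁) (hmn₂ : m₂ ≠ n₂)
    {p : R} (hp : Prime p) {j : ℕ} (hj : ¬ p ∣ (g * h) j)
    (hdvd : ∀ i, i ≠ j → p ∣ (g * h) i)
    (hm : ¬ p ^ 2 ∣ g m₁ * h m₂) (hn : ¬ p ^ 2 ∣ g n₁ * h n₂) :
    j = m₁ * n₂ ∨ j = n₁ * m₂ := by
  have hI : (Ideal.span {p}).IsPrime := (Ideal.span_singleton_prime hp.ne_zero).2 hp
  have hmem : ∀ x : R, x ∉ Ideal.span {p} ↔ ¬ p ∣ x := fun x => by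
    rw [Ideal.mem_span_singleton]
  obtain ⟨a, b, -, ha, hb⟩ := exists_factor_notMem ((hmem _).2 hj)
  obtain ⟨k, K, hg⟩ := exists_extremes _ hgfin ha
  obtain ⟨l, L, hh⟩ := exists_extremes _ hhfin hb
  have hgh := hg.mul hI hh
  have hkl : k * l = j := by
    by_contra hne
    exact (hmem _).1 hgh.1 (hdvd _ hne)
  have hKL : K * L = j := by
    by_contra hne
    exact (hmem _).1 hgh.2.1 (hdvd _ hne)
  obtain ⟨rfl, rfl⟩ := eq_and_eq_of_mul_eq hg.pos hh.pos hg.le hh.le (hKL.trans hkl.symm)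
  -- Both factors are monomials modulo `p`, so a pair of indices missing both `K` and `L`
  -- contributes a term divisible by `p ^ 2`.
  have key : ∀ s t, ¬ p ^ 2 ∣ g s * h t → s = K ∨ t = L := by
    intro s t hst
    by_contra! hne
    have hs : p ∣ g s := by
      by_contra hc
      have := hg.2.2 s ((hmem _).2 hc)
      exact hne.1 (le_antisymm this.2 this.1)
    have ht : p ∣ h t := by
      by_contra hc
      have := hh.2.2 t ((hmem _).2 hc)
      exact hne.2 (le_antisymm this.2 this.1)
    exact hst (pow_two p ▸ mul_dvd_mul hs ht)
  rcases key _ _ hm with h1 | h1 <;> rcases key _ _ hn with h2 | h2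
  · exact absurd (h1.trans h2.symm) hmn₁
  · left; rw [h1, h2, hkl]
  · right; rw [h1, h2, hkl]
  · exact absurd (h1.trans h2.symm) hmn₂

/-- A nonconstant factor of an algebraically primitive Dirichlet polynomial is not a monomial. -/
theorem AlgPrimitive.min_ne_max [CommRing R] {g h : ArithmeticFunction R}
    (hprim : AlgPrimitive (g * h)) (hgnc : Nonconst g) {k K : ℕ} (hg : Extremes ⊥ g k K) :
    k ≠ K := by
  rintro rfl
  obtain ⟨i, hi, hgi⟩ := hgnc
  have hik := hg.2.2 i (by simpa using hgi)
  have hk1 : k = 1 := hprim k fun s hs => by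
    obtain ⟨a, b, rfl, ha, -⟩ := exists_factor_notMem (I := ⊥) (by simpa using hs)
    have hak := hg.2.2 a ha
    exact Dvd.intro b (by rw [le_antisymm hak.1 hak.2])
  omega

/-- a symmetric criterion using two prime elements. -/
theorem two_prime_irreducible
    [CommRing R] [IsDomain R] [UniqueFactorizationMonoid R]
    (f : ArithmeticFunction R) (hfin : IsDP f) (hprim : AlgPrimitive f)
    (m n : ℕ) (hmn : m < n)
    (hmin : f m ≠ 0) (hmin' : ∀ i : ℕ, i < m → f i = 0)
    (hdeg : f n ≠ 0) (hdeg' : ∀ i : ℕ, n < i → f i = 0)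
    (p q : R) (hp : Prime p) (hq : Prime q)
    (j₁ j₂ : ℕ) (hj₁ : m < j₁) (hj₁' : j₁ < n) (hj₂ : m < j₂) (hj₂' : j₂ < n)
    (hjne : j₁ ≠ j₂) (hjprod : j₁ * j₂ ≠ m * n)
    (hpdvd : ∀ i : ℕ, m ≤ i → i ≤ n → i ≠ j₁ → p ∣ f i)
    (hpj₁ : ¬ p ∣ f j₁) (hpm : ¬ p ^ 2 ∣ f m) (hpn : ¬ p ^ 2 ∣ f n)
    (hqdvd : ∀ i : ℕ, m ≤ i → i ≤ n → i ≠ j₂ → q ∣ f i)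
    (hqj₂ : ¬ q ∣ f j₂) (hqm : ¬ q ^ 2 ∣ f m) (hqn : ¬ q ^ 2 ∣ f n) :
    IrreducibleDP f := by
  rintro ⟨g, h, hgfin, hhfin, hgnc, hhnc, rfl⟩
  obtain ⟨m₁, n₁, hg⟩ := exists_extremes (⊥ : Ideal R) hgfin
    (a := hgnc.choose) (by simpa using hgnc.choose_spec.2)
  obtain ⟨m₂, n₂, hh⟩ := exists_extremes (⊥ : Ideal R) hhfin
    (a := hhnc.choose) (by simpa using hhnc.choose_spec.2)
  have hgh := hg.mul Ideal.isPrime_bot hh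
  have hm : m = m₁ * m₂ := le_antisymm
    (not_lt.1 fun hlt => hgh.1 (by simpa using hmin' _ hlt)) (hgh.2.2 m (by simpa using hmin)).1
  have hn : n = n₁ * n₂ := le_antisymm (hgh.2.2 n (by simpa using hdeg)).2
    (not_lt.1 fun hlt => hgh.2.1 (by simpa using hdeg' _ hlt))
  have hfm : (g * h) m = g m₁ * h m₂ := by
    rw [hm]; simpa [sub_eq_zero] using mul_apply_min_sub_mem hg hh
  have hfn : (g * h) n = g n₁ * h n₂ := by
    rw [hn]; simpa [sub_eq_zero] using mul_apply_max_sub_mem hg hh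
  have hmn₁ : m₁ ≠ n₁ := hprim.min_ne_max hgnc hg
  have hmn₂ : m₂ ≠ n₂ := by
    rw [mul_comm] at hprim
    exact hprim.min_ne_max hhnc hh
  -- Outside `[m, n]` the coefficients vanish, so the divisibility hypotheses hold everywhere.
  have hext : ∀ (r : R) (j : ℕ), (∀ i : ℕ, m ≤ i → i ≤ n → i ≠ j → r ∣ (g * h) i) →
      ∀ i, i ≠ j → r ∣ (g * h) i := by
    intro r j hr i hij
    rcases lt_or_ge i m with h1 | h1
    · rw [hmin' i h1]; exact dvd_zero r
    rcases lt_or_ge n i with h2 | h2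
    · rw [hdeg' i h2]; exact dvd_zero r
    exact hr i h1 h2 hij
  rw [hfm] at hpm hqm
  rw [hfn] at hpn hqn
  have h1 := index_eq_cross hgfin hhfin hmn₁ hmn₂ hp hpj₁ (hext p j₁ hpdvd) hpm hpn
  have h2 := index_eq_cross hgfin hhfin hmn₁ hmn₂ hq hqj₂ (hext q j₂ hqdvd) hqm hqn
  rcases h1 with h1 | h1 <;> rcases h2 with h2 | h2
  · exact hjne (h1.trans h2.symm)
  · exact hjprod (by rw [h1, h2, hm, hn]; ring)
  · exact hjprod (by rw [h1, h2, hm, hn]; ring)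
  · exact hjne (h1.trans h2.symm)

end DirichletPoly
end

section
/- Let f be a nonzero Dirichlet polynomial with integer coefficients a_i = f(i) whose degree n is composite, let p be the least prime factor of n, let k ≥ 1 be the number of distinct prime numbers dividing at least one element of the support of f, and let H(f) = max{|a_i| : i ∈ supp f}. Suppose that |Σ_{i ∈ supp f} a_i·i^t| = P·q for a prime number P, a positive integer q, and an integer t satisfying t > (n/p)·log( (n·q·H(f)/p) · (n/2)^{k·(1 + log₃(log₂ 12)/2)} ), where log is the natural logarithm and log_b denotes the base-b logarithm. Then f cannot be written as a product of two nonconstant Dirichlet polynomials with integer coefficients. -/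
/-!
Suppose `f = g * h` with `deg g = d ≥ 2` and `deg h = e ≥ 2`, so that `n = d e` and
`d, e ≤ n / p`. Since `f(-t) = g(-t) h(-t)` and `|f(-t)| = P q`, the prime `P` divides one of the
two values and the other one is at most `q` in absolute value. Hence it suffices to show that
both `|g(-t)|` and `|h(-t)|` exceed `q` (`factor_value`, applied to both factors).

The leading term of `g(-t)` is at least `d ^ t`, the others sum to at most
`(d - 1) ^ (t + 1) * max |g i|`, and `(d / (d - 1)) ^ t ≥ exp (t / d)` is larger than
`d q H B` with `B = (n / 2) ^ (k (1 + log₃ (log₂ 12) / 2))`, by the assumption on `t`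
(`exp_gap`, `value_lower`). What remains is the height bound `|g i| ≤ H B`.

For this, `p ↦ X_p` turns Dirichlet polynomials into polynomials in several variables
(`bohrLift`). For complex polynomials `G`, `H` in `r` variables there is a nonzero coefficient
`c` of `H` such that every coefficient of `G` satisfies
`|G_m| |c| ≤ ∏ i, (deg_i G).choose (m i) * ‖G H‖₂`, where `‖·‖₂` is the `ℓ²` norm of the
coefficients (`mv_bound`). This goes by induction on `r`: write `G`, `H` as polynomials in one
variable with coefficients in the remaining ones; at each point of the torus, the one-variable
facts `|G_j| ≤ (deg G).choose j * M(G)`, `|lc H| ≤ M(H)` and `M(G H) ≤ ‖G H‖₂` on the Mahler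
measure `M` bound `|G_j lc H|`, and integrating over the torus (Parseval) gives
`‖G_j lc H‖₂ ≤ (deg G).choose j * ‖G H‖₂` (`step_bound`). The induction hypothesis then applies
to the product of `G_j` and `lc H`.

For integer coefficients `|c| ≥ 1`, and `‖f‖₂ ≤ √n H`. A variable contributes a binomial
coefficient other than `1` only if its prime is relevant for `f`, and then
`D.choose j ≤ 2 ^ (D - 1) ≤ d / 2 ≤ n / 4`. So `|g i| ≤ (n / 4) ^ k √n H` (`height_bound`), which
is at most `(n / 2) ^ (3 k / 2) H`; finally `log₃ (log₂ 12) ≥ 1` (`rpow_bound`).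
-/

namespace DirichletPoly

variable {R : Type*}

/-! ### Parseval's identity on the torus -/

section

open MvPolynomial MeasureTheory

-- Orthonormality of `UnitAddTorus.mFourier` is stated for the normalised Haar measure.
attribute [local instance] instMeasureSpaceUnitAddCircle

local instance isProbabilityMeasure_volume_unitAddCircle :
    IsProbabilityMeasure (volume : Measure UnitAddCircle) :=
  inferInstanceAs (IsProbabilityMeasure AddCircle.haarAddCircle)

/-- The point `(exp (2πi θ₁), …, exp (2πi θₙ))` of `ℂⁿ`. -/
noncomputable def torusPt {n : ℕ} (θ : UnitAddTorus (Fin n)) : Fin n → ℂ :=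
  fun i => fourier 1 (θ i)

theorem eval_torusPt {n : ℕ} (A : MvPolynomial (Fin n) ℂ) (θ : UnitAddTorus (Fin n)) :
    eval (torusPt θ) A =
      (∑ m ∈ A.support, coeff m A • UnitAddTorus.mFourier (fun i => (m i : ℤ))) θ := by
  rw [eval_eq']
  simp only [torusPt, UnitAddTorus.mFourier, ContinuousMap.coe_sum, ContinuousMap.coe_smul,
    Finset.sum_apply, Pi.smul_apply, ContinuousMap.coe_mk, smul_eq_mul]
  refine Finset.sum_congr rfl fun m _ => ?_
  congr 1
  refine Finset.prod_congr rfl fun i _ => ?_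
  simp [fourier_apply, AddCircle.toCircle_nsmul]

/-- The square of the `ℓ²` norm of the coefficients of a polynomial. -/
noncomputable def sqNorm {n : ℕ} (A : MvPolynomial (Fin n) ℂ) : ℝ :=
  ∑ m ∈ A.support, ‖coeff m A‖ ^ 2

theorem integrable_eval {n : ℕ} (A : MvPolynomial (Fin n) ℂ) :
    Integrable (fun θ : UnitAddTorus (Fin n) => ‖eval (torusPt θ) A‖ ^ 2) := by
  simp_rw [eval_torusPt]
  refine Continuous.integrable_of_hasCompactSupport ?_ (HasCompactSupport.of_compactSpace _)
  exact (ContinuousMap.continuous _).norm.pow 2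

theorem sqNorm_eq_integral {n : ℕ} (A : MvPolynomial (Fin n) ℂ) :
    sqNorm A = ∫ θ : UnitAddTorus (Fin n), ‖eval (torusPt θ) A‖ ^ 2 := by
  have hinj : Function.Injective (fun (m : Fin n →₀ ℕ) (i : Fin n) => (m i : ℤ)) := by
    intro a b h
    ext i
    have := congrFun h i
    simpa using this
  have ho := (UnitAddTorus.orthonormal_mFourier (d := Fin n)).comp _ hinj
  have h1 := ho.inner_sum (fun m => coeff m A) (fun m => coeff m A) A.support
  simp only [Function.comp_def, UnitAddTorus.mFourierLp] at h1
  simp_rw [← map_smul, ← map_sum] at h1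
  rw [ContinuousMap.inner_toLp] at h1
  simp_rw [← eval_torusPt, Complex.mul_conj, Complex.conj_mul'] at h1
  simp_rw [Complex.normSq_eq_norm_sq] at h1
  rw [integral_complex_ofReal] at h1
  unfold sqNorm
  exact_mod_cast h1.symm

/-! ### Coefficients of factors of complex polynomials -/

/-- Here `d`, `e` and `s` are only upper bounds for `deg G`, `deg H` and the support of `G * H`:
specialising coefficients at a point of the torus may lower the degrees. -/
theorem univariate_bound (G H : Polynomial ℂ) (d e j : ℕ) (hG : G.natDegree ≤ d)
    (hH : H.natDegree ≤ e) (s : Finset ℕ) (hs : (G * H).support ⊆ s) :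
    ‖G.coeff j * H.coeff e‖ ^ 2 ≤ (d.choose j : ℝ) ^ 2 * ∑ a ∈ s, ‖(G * H).coeff a‖ ^ 2 := by
  have hG0 := G.mahlerMeasure_nonneg
  have h1 := G.norm_coeff_le_choose_mul_mahlerMeasure j
  have h1' : ‖G.coeff j‖ ≤ d.choose j * G.mahlerMeasure :=
    h1.trans (by gcongr)
  have h2 : ‖H.coeff e‖ ≤ H.mahlerMeasure := by
    rcases hH.eq_or_lt with h | h
    · rw [← h]; exact H.leadingCoeff_le_mahlerMeasure
    · rw [Polynomial.coeff_eq_zero_of_natDegree_lt h, norm_zero]; exact H.mahlerMeasure_nonneg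
  have h3 := (G * H).mahlerMeasure_le_sqrt_sum_sq_norm_coeff
  rw [Polynomial.mahlerMeasure_mul] at h3
  have h4 : ∑ a ∈ (G * H).support, ‖(G * H).coeff a‖ ^ 2 ≤ ∑ a ∈ s, ‖(G * H).coeff a‖ ^ 2 :=
    Finset.sum_le_sum_of_subset_of_nonneg hs (fun _ _ _ => by positivity)
  have h5 : ‖G.coeff j * H.coeff e‖ ≤
      d.choose j * √(∑ a ∈ (G * H).support, ‖(G * H).coeff a‖ ^ 2) := by
    rw [norm_mul]
    calc _ ≤ (d.choose j * G.mahlerMeasure) * H.mahlerMeasure := by gcongr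
      _ = d.choose j * (G.mahlerMeasure * H.mahlerMeasure) := by ring
      _ ≤ _ := by gcongr
  calc _ ≤ (d.choose j * √(∑ a ∈ (G * H).support, ‖(G * H).coeff a‖ ^ 2)) ^ 2 := by gcongr
    _ = d.choose j ^ 2 * ∑ a ∈ (G * H).support, ‖(G * H).coeff a‖ ^ 2 := by
      rw [mul_pow, Real.sq_sqrt (by positivity)]
    _ ≤ _ := by gcongr

/-- The one-variable bound, integrated over the torus of the remaining variables. -/
theorem step_bound {n : ℕ} (G H : Polynomial (MvPolynomial (Fin n) ℂ)) (j : ℕ) :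
    sqNorm (G.coeff j * H.leadingCoeff) ≤
      (G.natDegree.choose j : ℝ) ^ 2 * ∑ a ∈ (G * H).support, sqNorm ((G * H).coeff a) := by
  simp_rw [sqNorm_eq_integral]
  rw [← integral_finsetSum _ (fun a _ => integrable_eval _), ← integral_const_mul]
  refine integral_mono (integrable_eval _)
    ((integrable_finsetSum _ (fun a _ => integrable_eval _)).const_mul _) fun θ => ?_
  have := univariate_bound (G.map (eval (torusPt θ))) (H.map (eval (torusPt θ)))
    G.natDegree H.natDegree j Polynomial.natDegree_map_le Polynomial.natDegree_map_le
    (G * H).support (by rw [← Polynomial.map_mul]; exact Polynomial.support_map_subset _ _)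
  simp only [Polynomial.leadingCoeff]
  simpa only [← Polynomial.map_mul, Polynomial.coeff_map, ← map_mul] using this

theorem sqNorm_finSucc {n : ℕ} (A : MvPolynomial (Fin (n + 1)) ℂ) :
    ∑ a ∈ (finSuccEquiv ℂ n A).support, sqNorm ((finSuccEquiv ℂ n A).coeff a) = sqNorm A := by
  unfold sqNorm
  rw [Finset.sum_sigma']
  refine Finset.sum_bij' (fun x _ => Finsupp.cons x.1 x.2) (fun m _ => ⟨m 0, Finsupp.tail m⟩)
    ?_ ?_ ?_ ?_ ?_
  · rintro ⟨a, m⟩ h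
    simp only [Finset.mem_sigma] at h
    exact mem_support_coeff_finSuccEquiv.1 h.2
  · intro m h
    simp only [Finset.mem_sigma]
    have : Finsupp.tail m ∈ ((finSuccEquiv ℂ n A).coeff (m 0)).support := by
      rw [mem_support_coeff_finSuccEquiv, Finsupp.cons_tail]; exact h
    refine ⟨?_, this⟩
    rw [Polynomial.mem_support_iff]
    rintro h0
    simp [h0] at this
  · rintro ⟨a, m⟩ h
    simp
  · intro m h
    simp
  · rintro ⟨a, m⟩ h
    simp [finSuccEquiv_coeff_coeff]

/-- The coefficient index `c` is the lexicographically leading one of `H`; it does not depend on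
the cofactor `G`. -/
theorem mv_bound : ∀ (n : ℕ) (H : MvPolynomial (Fin n) ℂ), H ≠ 0 →
    ∃ c, coeff c H ≠ 0 ∧ ∀ (G : MvPolynomial (Fin n) ℂ) (m), ‖coeff m G‖ ^ 2 * ‖coeff c H‖ ^ 2 ≤
      (∏ i, ((degreeOf i G).choose (m i) : ℝ)) ^ 2 * sqNorm (G * H)
  | 0, H, hH => by
    obtain ⟨c, hc⟩ := ne_zero_iff.1 hH
    refine ⟨c, hc, fun G m => ?_⟩
    have h0 : sqNorm (G * H) = ‖coeff 0 G * coeff 0 H‖ ^ 2 := by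
      have hGH : G * H = monomial 0 (coeff 0 G * coeff 0 H) := by
        conv_lhs => rw [eq_C_of_isEmpty G, eq_C_of_isEmpty H, ← C_mul]
        rfl
      classical
      rw [hGH, sqNorm, support_monomial]
      split_ifs with h
      · simp [h]
      · simp
    rw [h0, Subsingleton.elim c 0, Subsingleton.elim m 0]
    simp [mul_pow]
  | n + 1, H, hH => by
    have hH0 : (finSuccEquiv ℂ n H).leadingCoeff ≠ 0 := by
      rw [Polynomial.leadingCoeff_ne_zero]
      simpa using hH
    obtain ⟨c, hc, hb⟩ := mv_bound n _ hH0
    have hcoef : coeff (c.cons (finSuccEquiv ℂ n H).natDegree) H =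
        coeff c (finSuccEquiv ℂ n H).leadingCoeff :=
      (finSuccEquiv_coeff_coeff c H _).symm
    refine ⟨c.cons (finSuccEquiv ℂ n H).natDegree, by rwa [hcoef], fun G m => ?_⟩
    have h1 := hb ((finSuccEquiv ℂ n G).coeff (m 0)) m.tail
    rw [finSuccEquiv_coeff_coeff, Finsupp.cons_tail] at h1
    have h2 := step_bound (finSuccEquiv ℂ n G) (finSuccEquiv ℂ n H) (m 0)
    rw [← map_mul, sqNorm_finSucc, natDegree_finSuccEquiv] at h2
    rw [hcoef, Fin.prod_univ_succ]
    refine h1.trans ?_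
    calc _ ≤ (∏ i : Fin n, ((degreeOf i.succ G).choose (m i.succ) : ℝ)) ^ 2 *
          (((degreeOf 0 G).choose (m 0) : ℝ) ^ 2 * sqNorm (G * H)) := by
          gcongr with i
          · exact Finset.sum_nonneg fun _ _ => by positivity
          · exact Nat.choose_le_choose _ (degreeOf_coeff_finSuccEquiv G i (m 0))
      _ = _ := by ring

/-! ### From Dirichlet polynomials to polynomials in several variables -/

/-- For a multiplicative `φ`, the map `f ↦ ∑ f(i) φ(i)` is multiplicative. Used for `φ i = i ^ t`
and for `φ i` the monomial attached to `i`. -/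
theorem sum_mul {A : Type*} [CommRing A] (φ : ℕ → A)
    (hφ : ∀ i j, i ≠ 0 → j ≠ 0 → φ (i * j) = φ i * φ j) (g h : ArithmeticFunction ℤ)
    (n d e : ℕ) (hn : d * e = n) (hd : ∀ i, d < i → g i = 0) (he : ∀ i, e < i → h i = 0) :
    ∑ i ∈ Finset.Icc 1 n, ((g * h) i : A) * φ i =
      (∑ i ∈ Finset.Icc 1 d, (g i : A) * φ i) * ∑ j ∈ Finset.Icc 1 e, (h j : A) * φ j := by
  rw [Finset.sum_mul_sum, ← Finset.sum_product']
  simp_rw [ArithmeticFunction.mul_apply, Int.cast_sum, Finset.sum_mul]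
  rw [Finset.sum_sigma']
  symm
  refine Finset.sum_of_injOn (fun x => ⟨x.1 * x.2, x⟩) ?_ ?_ ?_ ?_
  · rintro x - y - hxy
    simp at hxy
    exact hxy.2
  · rintro ⟨a, b⟩ hab
    simp only [Finset.coe_product, Set.mem_prod, Finset.mem_coe, Finset.mem_Icc] at hab
    simp only [Finset.coe_sigma, Set.mem_sigma_iff, Finset.mem_coe, Finset.mem_Icc,
      Nat.mem_divisorsAntidiagonal, true_and]
    obtain ⟨⟨ha, ha'⟩, hb, hb'⟩ := hab
    refine ⟨⟨Nat.mul_pos ha hb, ?_⟩, (Nat.mul_pos ha hb).ne'⟩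
    rw [← hn]; exact Nat.mul_le_mul ha' hb'
  · rintro ⟨k, a, b⟩ hk hni
    simp only [Finset.mem_sigma, Finset.mem_Icc, Nat.mem_divisorsAntidiagonal] at hk
    obtain ⟨-, rfl, hne⟩ := hk
    have ha : a ≠ 0 := left_ne_zero_of_mul hne
    have hb : b ≠ 0 := right_ne_zero_of_mul hne
    by_cases h1 : d < a
    · simp [hd a h1]
    by_cases h2 : e < b
    · simp [he b h2]
    exfalso
    apply hni
    refine ⟨(a, b), ?_, rfl⟩
    simp
    omega
  · rintro ⟨a, b⟩ hab
    simp only [Finset.mem_product, Finset.mem_Icc] at hab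
    simp only
    rw [hφ a b (by omega) (by omega)]
    push_cast
    ring

/-- The exponents in the prime factorization of `i`, as a vector indexed by all of `0, …, N`
(entries at non-primes are `0`). It determines `i` among `1, …, N`. -/
noncomputable def expVec (N i : ℕ) : Fin (N + 1) →₀ ℕ :=
  Finsupp.equivFunOnFinite.symm fun a => i.factorization a

@[simp]
theorem expVec_apply (N i : ℕ) (a : Fin (N + 1)) : expVec N i a = i.factorization a := rfl

theorem expVec_mul (N i j : ℕ) (hi : i ≠ 0) (hj : j ≠ 0) :
    expVec N (i * j) = expVec N i + expVec N j := by
  ext a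
  simp [Nat.factorization_mul hi hj]

theorem expVec_inj {N i j : ℕ} (hi : i ∈ Finset.Icc 1 N) (hj : j ∈ Finset.Icc 1 N)
    (h : expVec N i = expVec N j) : i = j := by
  rw [Finset.mem_Icc] at hi hj
  refine Nat.eq_of_factorization_eq (by omega) (by omega) fun a => ?_
  by_cases ha : a < N + 1
  · exact DFunLike.congr_fun h (⟨a, ha⟩ : Fin (N + 1))
  · rw [Nat.factorization_eq_zero_of_lt (by omega), Nat.factorization_eq_zero_of_lt (by omega)]

/-- The polynomial in the variables `X_0, …, X_N` obtained from `∑_{1 ≤ i ≤ d} g(i) / i ^ s` by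
replacing `p ^ (-s)` with `X_p` for each prime `p`. -/
noncomputable def bohrLift (N d : ℕ) (g : ArithmeticFunction ℤ) : MvPolynomial (Fin (N + 1)) ℂ :=
  ∑ i ∈ Finset.Icc 1 d, (g i : MvPolynomial (Fin (N + 1)) ℂ) * monomial (expVec N i) 1

theorem coeff_bohrLift (N d : ℕ) (g : ArithmeticFunction ℤ) (m : Fin (N + 1) →₀ ℕ) :
    coeff m (bohrLift N d g) =
      ∑ i ∈ Finset.Icc 1 d, if expVec N i = m then (g i : ℂ) else 0 := by
  classical
  rw [bohrLift, coeff_sum]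
  refine Finset.sum_congr rfl fun i _ => ?_
  have : (g i : MvPolynomial (Fin (N + 1)) ℂ) = C (g i : ℂ) := by simp
  rw [this, coeff_C_mul, coeff_monomial]
  simp

theorem coeff_expVec_bohrLift {N d : ℕ} (hd : d ≤ N) (g : ArithmeticFunction ℤ) {i : ℕ}
    (hi : i ∈ Finset.Icc 1 d) : coeff (expVec N i) (bohrLift N d g) = g i := by
  have hsub : ∀ j ∈ Finset.Icc 1 d, j ∈ Finset.Icc 1 N := fun j hj => by
    rw [Finset.mem_Icc] at hj ⊢; omega
  rw [coeff_bohrLift, Finset.sum_eq_single i]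
  · simp
  · intro j hj hji
    rw [if_neg]
    exact fun h => hji (expVec_inj (hsub j hj) (hsub i hi) h)
  · exact fun h => absurd hi h

theorem exists_of_coeff_ne_zero {N d : ℕ} (g : ArithmeticFunction ℤ)
    {m : Fin (N + 1) →₀ ℕ} (hm : coeff m (bohrLift N d g) ≠ 0) :
    ∃ i ∈ Finset.Icc 1 d, g i ≠ 0 ∧ expVec N i = m := by
  have hm' := hm
  rw [coeff_bohrLift] at hm'
  obtain ⟨i, hi, h⟩ := Finset.exists_ne_zero_of_sum_ne_zero hm'
  have him : expVec N i = m := by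
    by_contra h'
    exact h (if_neg h')
  refine ⟨i, hi, ?_, him⟩
  rw [if_pos him] at h
  exact_mod_cast h

theorem sqNorm_bohrLift_le {N : ℕ} (f : ArithmeticFunction ℤ) (H : ℝ)
    (hH : ∀ i, |(f i : ℝ)| ≤ H) : sqNorm (bohrLift N N f) ≤ N * H ^ 2 := by
  classical
  have hsub : (bohrLift N N f).support ⊆ (Finset.Icc 1 N).image (expVec N) := by
    intro m hm
    obtain ⟨i, hi, -, him⟩ := exists_of_coeff_ne_zero f (mem_support_iff.1 hm)
    exact Finset.mem_image.2 ⟨i, hi, him⟩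
  calc sqNorm (bohrLift N N f)
      ≤ ∑ m ∈ (Finset.Icc 1 N).image (expVec N), ‖coeff m (bohrLift N N f)‖ ^ 2 :=
        Finset.sum_le_sum_of_subset_of_nonneg hsub fun _ _ _ => by positivity
    _ = ∑ i ∈ Finset.Icc 1 N, ‖coeff (expVec N i) (bohrLift N N f)‖ ^ 2 :=
        Finset.sum_image fun i hi j hj h => expVec_inj hi hj h
    _ ≤ ∑ i ∈ Finset.Icc 1 N, H ^ 2 := by
        refine Finset.sum_le_sum fun i hi => ?_
        rw [coeff_expVec_bohrLift le_rfl f hi, Complex.norm_intCast]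
        gcongr
        exact hH i
    _ = N * H ^ 2 := by simp

theorem choose_succ_le (D j : ℕ) : (D + 1).choose j ≤ 2 ^ D := by
  induction D generalizing j with
  | zero => rcases j with _ | _ | j <;> simp [Nat.choose_eq_zero_of_lt]
  | succ D ih =>
    cases j with
    | zero => simpa using Nat.one_le_two_pow
    | succ j =>
      rw [Nat.choose_succ_succ, pow_succ, mul_two]
      exact Nat.add_le_add (ih j) (ih (j + 1))

/-- Coefficients of a factor `g` of an integer Dirichlet polynomial of degree `n` with `k` relevant
primes and height at most `H` are at most `(n / 4) ^ k * √n * H` in absolute value. -/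
theorem height_bound (g h : ArithmeticFunction ℤ) (n d e k : ℕ) (hn4 : 4 ≤ n) (hn : d * e = n)
    (hd2 : 2 * d ≤ n) (hg : g d ≠ 0) (hh : h e ≠ 0)
    (hd : ∀ i, d < i → g i = 0) (he : ∀ i, e < i → h i = 0)
    (hk : {p : ℕ | p.Prime ∧ ∃ i : ℕ, (g * h) i ≠ 0 ∧ p ∣ i}.ncard = k) (hk1 : 1 ≤ k)
    (H : ℝ) (hH : ∀ i, |((g * h) i : ℝ)| ≤ H) (i : ℕ) :
    |(g i : ℝ)| ^ 2 ≤ (((n : ℝ) / 4) ^ k) ^ 2 * (n * H ^ 2) := by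
  classical
  set R := {p : ℕ | p.Prime ∧ ∃ i : ℕ, (g * h) i ≠ 0 ∧ p ∣ i} with hR
  have hRfin : R.Finite := Set.finite_of_ncard_pos (by omega)
  by_cases hi : i ∈ Finset.Icc 1 d
  swap
  · have : g i = 0 := by
      rcases Nat.eq_zero_or_pos i with rfl | h0
      · simp
      · exact hd i (by rw [Finset.mem_Icc] at hi; omega)
    rw [this]
    rw [Int.cast_zero, abs_zero, zero_pow two_ne_zero]
    positivity
  have hd0 : d ≠ 0 := by rintro rfl; simp at hg
  have he0 : e ≠ 0 := by rintro rfl; simp at hh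
  have hdn : d ≤ n := by omega
  have hen : e ≤ n := hn ▸ Nat.le_mul_of_pos_left e (by omega)
  have hprod : bohrLift n n (g * h) = bohrLift n d g * bohrLift n e h :=
    sum_mul (fun i => monomial (expVec n i) 1) (fun i j hi hj => by
      simp only [expVec_mul n i j hi hj, monomial_mul, one_mul]) g h n d e hn hd he
  have hG0 : bohrLift n d g ≠ 0 := by
    intro h0
    have := coeff_expVec_bohrLift hdn g (i := d) (by rw [Finset.mem_Icc]; omega)
    rw [h0, coeff_zero] at this
    exact hg (by exact_mod_cast this.symm)
  have hH0 : bohrLift n e h ≠ 0 := by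
    intro h0
    have := coeff_expVec_bohrLift hen h (i := e) (by rw [Finset.mem_Icc]; omega)
    rw [h0, coeff_zero] at this
    exact hh (by exact_mod_cast this.symm)
  obtain ⟨c, hc, hb⟩ := mv_bound _ _ hH0
  have h1 := hb (bohrLift n d g) (expVec n i)
  rw [← hprod, coeff_expVec_bohrLift hdn g hi, Complex.norm_intCast] at h1
  have hc1 : 1 ≤ ‖coeff c (bohrLift n e h)‖ ^ 2 := by
    obtain ⟨j, hj, hj0, rfl⟩ := exists_of_coeff_ne_zero h hc
    rw [coeff_expVec_bohrLift hen h hj, Complex.norm_intCast]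
    exact one_le_pow₀ (by exact_mod_cast Int.one_le_abs hj0)
  have hfac : ∀ a : Fin (n + 1),
      ((degreeOf a (bohrLift n d g)).choose (expVec n i a) : ℝ) ≤
        if (a : ℕ) ∈ R then (n : ℝ) / 4 else 1 := by
    intro a
    have hn4' : (1 : ℝ) ≤ n / 4 := by
      rw [le_div_iff₀ (by norm_num)]; exact_mod_cast (by omega : 1 * 4 ≤ n)
    rcases hD : degreeOf a (bohrLift n d g) with _ | D
    · have : ((Nat.choose 0 (expVec n i a) : ℕ) : ℝ) ≤ 1 := by
        exact_mod_cast Nat.choose_le_two_pow 0 _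
      refine this.trans ?_
      split_ifs
      · exact hn4'
      · rfl
    -- Degrees add up in products, so a variable occurring in the lift of `g` occurs in that of
    -- `g * h`.
    have haR : (a : ℕ) ∈ R := by
      have hdeg : ¬ degreeOf a (bohrLift n n (g * h)) ≤ 0 := by
        rw [hprod, degreeOf_mul_eq hG0 hH0]; omega
      rw [degreeOf_le_iff] at hdeg
      push Not at hdeg
      obtain ⟨m, hm, hma⟩ := hdeg
      obtain ⟨j, -, hj0, rfl⟩ := exists_of_coeff_ne_zero _ (mem_support_iff.1 hm)
      rw [expVec_apply] at hma
      have hmem : (a : ℕ) ∈ j.primeFactors := by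
        rw [← Nat.support_factorization, Finsupp.mem_support_iff]; omega
      exact ⟨Nat.prime_of_mem_primeFactors hmem, j, hj0, Nat.dvd_of_mem_primeFactors hmem⟩
    rw [if_pos haR]
    have hdeg : ¬ degreeOf a (bohrLift n d g) ≤ D := by omega
    rw [degreeOf_le_iff] at hdeg
    push Not at hdeg
    obtain ⟨m, hm, hma⟩ := hdeg
    obtain ⟨j, hj, hj0, rfl⟩ := exists_of_coeff_ne_zero _ (mem_support_iff.1 hm)
    rw [expVec_apply] at hma
    rw [Finset.mem_Icc] at hj
    have h2 : 2 ^ (D + 1) ≤ d := calc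
      2 ^ (D + 1) ≤ (a : ℕ) ^ (D + 1) := Nat.pow_le_pow_left haR.1.two_le _
      _ ≤ (a : ℕ) ^ j.factorization a := Nat.pow_le_pow_right haR.1.pos hma
      _ ≤ j := Nat.ordProj_le a (by omega)
      _ ≤ d := hj.2
    have h3 := choose_succ_le D (expVec n i a)
    rw [le_div_iff₀ (by norm_num)]
    have h4 : (D + 1).choose (expVec n i a) * 4 ≤ n := by rw [pow_succ] at h2; omega
    exact_mod_cast h4
  have hprodle : ∏ a : Fin (n + 1), ((degreeOf a (bohrLift n d g)).choose (expVec n i a) : ℝ) ≤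
      ((n : ℝ) / 4) ^ k := by
    refine (Finset.prod_le_prod (fun _ _ => by positivity) fun a _ => hfac a).trans ?_
    rw [Finset.prod_ite, Finset.prod_const, Finset.prod_const_one, mul_one]
    refine pow_le_pow_right₀ ?_ ?_
    · rw [le_div_iff₀ (by norm_num)]; exact_mod_cast (by omega : 1 * 4 ≤ n)
    · rw [← hk, Set.ncard_eq_toFinset_card R hRfin]
      refine Finset.card_le_card_of_injOn (fun a => (a : ℕ)) ?_ ?_
      · intro a ha
        simpa using ha
      · exact fun a _ b _ hab => Fin.ext hab
  calc |(g i : ℝ)| ^ 2 ≤ |(g i : ℝ)| ^ 2 * ‖coeff c (bohrLift n e h)‖ ^ 2 :=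
        le_mul_of_one_le_right (by positivity) hc1
    _ ≤ _ := h1
    _ ≤ _ := by
      gcongr
      · exact Finset.sum_nonneg fun _ _ => by positivity
      · exact sqNorm_bohrLift_le _ H hH

/-! ### Lower bounds for the values of the factors -/

/-- Squared form of `(n / 4) ^ k * √n ≤ (n / 2) ^ (k (1 + log₃ (log₂ 12) / 2))`; of the exponent,
only `log₃ (log₂ 12) ≥ 1` is used. -/
theorem rpow_bound (n k : ℕ) (hn4 : 4 ≤ n) (hk1 : 1 ≤ k) :
    (((n : ℝ) / 4) ^ k) ^ 2 * n ≤
      (((n : ℝ) / 2) ^ ((k : ℝ) * (1 + Real.logb 3 (Real.logb 2 12) / 2))) ^ 2 := by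
  have hn : (4 : ℝ) ≤ n := by exact_mod_cast hn4
  have hlog2 : (3 : ℝ) ≤ Real.logb 2 12 := by
    rw [Real.le_logb_iff_rpow_le (by norm_num) (by norm_num)]; norm_num
  have hlog : (1 : ℝ) ≤ Real.logb 3 (Real.logb 2 12) := by
    rw [Real.le_logb_iff_rpow_le (by norm_num) (by linarith)]; simpa using hlog2
  have hle : ((n : ℝ) / 2) ^ (3 * k) ≤
      (((n : ℝ) / 2) ^ ((k : ℝ) * (1 + Real.logb 3 (Real.logb 2 12) / 2))) ^ 2 := by
    rw [← Real.rpow_natCast, ← Real.rpow_natCast, ← Real.rpow_mul (by positivity)]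
    refine Real.rpow_le_rpow_of_exponent_le (by linarith) ?_
    push_cast
    have : (0 : ℝ) ≤ k := by positivity
    nlinarith
  refine le_trans ?_ hle
  have h1 : (n : ℝ) ≤ (2 * n) ^ k := by
    calc (n : ℝ) ≤ (2 * n) ^ 1 := by linarith
      _ ≤ (2 * n) ^ k := pow_le_pow_right₀ (by linarith) hk1
  calc (((n : ℝ) / 4) ^ k) ^ 2 * n ≤ (((n : ℝ) / 4) ^ k) ^ 2 * (2 * n) ^ k := by gcongr
    _ = (((n : ℝ) / 4) ^ 2 * (2 * n)) ^ k := by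
        rw [mul_pow _ (2 * (n : ℝ)), ← pow_mul, ← pow_mul, mul_comm k 2]
    _ = ((n : ℝ) / 2) ^ (3 * k) := by
        rw [pow_mul]
        congr 1
        ring

theorem value_lower (g : ArithmeticFunction ℤ) (d t : ℕ) (hd2 : 2 ≤ d) (hg : g d ≠ 0) (q M : ℝ)
    (hq : 1 ≤ q) (hM : 1 ≤ M) (hgM : ∀ i, |(g i : ℝ)| ≤ M)
    (hlt : ((d : ℝ) - 1) ^ t * (d * q * M) < (d : ℝ) ^ t) :
    q < |∑ i ∈ Finset.Icc 1 d, (g i : ℝ) * (i : ℝ) ^ t| := by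
  obtain ⟨c, rfl⟩ : ∃ c, d = c + 1 := ⟨d - 1, by omega⟩
  have hc : (1 : ℝ) ≤ c := by exact_mod_cast (by omega : 1 ≤ c)
  push_cast at hlt
  rw [add_sub_cancel_right] at hlt
  rw [Finset.sum_Icc_succ_top (by omega)]
  have h1 : |∑ i ∈ Finset.Icc 1 c, (g i : ℝ) * (i : ℝ) ^ t| ≤ c * (M * c ^ t) := by
    calc _ ≤ ∑ i ∈ Finset.Icc 1 c, |(g i : ℝ) * (i : ℝ) ^ t| := Finset.abs_sum_le_sum_abs _ _
      _ ≤ ∑ i ∈ Finset.Icc 1 c, M * (c : ℝ) ^ t := by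
        refine Finset.sum_le_sum fun i hi => ?_
        rw [Finset.mem_Icc] at hi
        rw [abs_mul, abs_of_nonneg (by positivity : (0 : ℝ) ≤ (i : ℝ) ^ t)]
        have : (i : ℝ) ≤ c := by exact_mod_cast hi.2
        gcongr
        exact hgM i
      _ = _ := by simp
  have h2 : ((c : ℝ) + 1) ^ t ≤ |(g (c + 1) : ℝ) * ((c + 1 : ℕ) : ℝ) ^ t| := by
    rw [abs_mul, abs_of_nonneg (by positivity : (0 : ℝ) ≤ ((c + 1 : ℕ) : ℝ) ^ t)]
    push_cast
    refine le_mul_of_one_le_left (by positivity) ?_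
    exact_mod_cast Int.one_le_abs hg
  have h3 := abs_sub_abs_le_abs_sub ((g (c + 1) : ℝ) * ((c + 1 : ℕ) : ℝ) ^ t)
    (-∑ i ∈ Finset.Icc 1 c, (g i : ℝ) * (i : ℝ) ^ t)
  rw [abs_neg, sub_neg_eq_add, add_comm (_ * _)] at h3
  have h4 : (1 : ℝ) ≤ c ^ t := one_le_pow₀ hc
  have h5 : (1 : ℝ) ≤ M * c ^ t := one_le_mul_of_one_le_of_one_le hM h4
  -- `(c + 1) q - c ≥ q` because `q ≥ 1`
  have h6 : q ≤ (M * c ^ t) * ((c + 1) * q - c) := by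
    have : q ≤ (c + 1) * q - c := by nlinarith
    nlinarith
  linarith

/-- Quantitative form of `(1 - 1 / d) ^ t ≤ exp (-t / d)`. -/
theorem exp_gap (d t : ℕ) (hd2 : 2 ≤ d) (x Y : ℝ) (hdx : (d : ℝ) ≤ x) (hY : 1 ≤ Y)
    (ht : x * Real.log Y < t) : ((d : ℝ) - 1) ^ t * Y < (d : ℝ) ^ t := by
  have hd : (2 : ℝ) ≤ d := by exact_mod_cast hd2
  have hd0 : (0 : ℝ) < d := by linarith
  have h1 : (d : ℝ) * Real.log Y < t :=
    (mul_le_mul_of_nonneg_right hdx (Real.log_nonneg hY)).trans_lt ht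
  have h2 : Real.log Y < t / d := by rw [lt_div_iff₀ hd0]; linarith
  have h3 : Y < Real.exp (t / d) := by rwa [← Real.log_lt_iff_lt_exp (by linarith)]
  have h4 : ((d : ℝ) - 1) ^ t ≤ d ^ t * Real.exp (-(t / d)) := by
    have : (d : ℝ) - 1 ≤ d * Real.exp (-(1 / d)) := by
      have := mul_le_mul_of_nonneg_left (Real.one_sub_le_exp_neg (1 / (d : ℝ))) hd0.le
      rwa [mul_sub, mul_one, mul_one_div_cancel hd0.ne'] at this
    calc ((d : ℝ) - 1) ^ t ≤ (d * Real.exp (-(1 / d))) ^ t :=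
          pow_le_pow_left₀ (by linarith) this t
      _ = _ := by
        rw [mul_pow, ← Real.exp_nat_mul]; congr 2; ring
  calc ((d : ℝ) - 1) ^ t * Y < ((d : ℝ) - 1) ^ t * Real.exp (t / d) :=
        mul_lt_mul_of_pos_left h3 (pow_pos (by linarith) t)
    _ ≤ (d ^ t * Real.exp (-(t / d))) * Real.exp (t / d) := by gcongr
    _ = d ^ t := by rw [mul_assoc, ← Real.exp_add]; simp

/-- Under the assumption on `t`, a factor takes a value larger than `q` at `-t`. -/
theorem factor_value (g h : ArithmeticFunction ℤ) (n d e k : ℕ) (hd2 : 2 ≤ d) (he2 : 2 ≤ e)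
    (hn : d * e = n) (hg : g d ≠ 0) (hh : h e ≠ 0)
    (hd : ∀ i, d < i → g i = 0) (he : ∀ i, e < i → h i = 0)
    (hk : {p : ℕ | p.Prime ∧ ∃ i : ℕ, (g * h) i ≠ 0 ∧ p ∣ i}.ncard = k) (hk1 : 1 ≤ k)
    (H : ℝ) (hH : ∀ i, |((g * h) i : ℝ)| ≤ H) (hH1 : 1 ≤ H) (q t : ℕ) (hq : 0 < q)
    (ht : ((n : ℝ) / (n.minFac : ℝ)) *
        Real.log (((n : ℝ) * (q : ℝ) * H / (n.minFac : ℝ)) *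
          ((n : ℝ) / 2) ^ ((k : ℝ) * (1 + Real.logb 3 (Real.logb 2 12) / 2))) < (t : ℝ)) :
    q < (∑ i ∈ Finset.Icc 1 d, g i * (i : ℤ) ^ t).natAbs := by
  have hn4 : 4 ≤ n := by nlinarith
  have hn4' : (4 : ℝ) ≤ n := by exact_mod_cast hn4
  have hp0 : (0 : ℝ) < n.minFac := by exact_mod_cast n.minFac_pos
  have hpe : n.minFac ≤ e := Nat.minFac_le_of_dvd he2 ⟨d, by rw [← hn, mul_comm]⟩
  have hdx : (d : ℝ) ≤ (n : ℝ) / n.minFac := by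
    rw [le_div_iff₀ hp0]
    exact_mod_cast hn ▸ Nat.mul_le_mul_left d hpe
  have hq1 : (1 : ℝ) ≤ q := by exact_mod_cast hq
  set B := ((n : ℝ) / 2) ^ ((k : ℝ) * (1 + Real.logb 3 (Real.logb 2 12) / 2)) with hB
  have hBk := rpow_bound n k hn4 hk1
  rw [← hB] at hBk
  have hB0 : 0 ≤ B := by positivity
  have hgM : ∀ i, |(g i : ℝ)| ≤ H * B := by
    intro i
    have h1 := height_bound g h n d e k hn4 hn (by nlinarith) hg hh hd he hk hk1 H hH i
    refine (sq_le_sq₀ (by positivity) (by positivity)).1 (h1.trans ?_)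
    calc _ = ((((n : ℝ) / 4) ^ k) ^ 2 * n) * H ^ 2 := by ring
      _ ≤ B ^ 2 * H ^ 2 := by gcongr
      _ = (H * B) ^ 2 := by ring
  have hM1 : 1 ≤ H * B := by
    refine le_trans ?_ (hgM d)
    exact_mod_cast Int.one_le_abs hg
  have hY : (n : ℝ) * q * H / n.minFac * B = n / n.minFac * (q * (H * B)) := by ring
  have hdY : (d : ℝ) * q * (H * B) ≤ n / n.minFac * (q * (H * B)) := by
    rw [mul_assoc]; gcongr
  have hd1 : (2 : ℝ) ≤ d := by exact_mod_cast hd2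
  have hY1 : 1 ≤ (n : ℝ) / n.minFac * (q * (H * B)) := by
    refine one_le_mul_of_one_le_of_one_le (by linarith) ?_
    exact one_le_mul_of_one_le_of_one_le hq1 hM1
  rw [hY] at ht
  have hgap := exp_gap d t hd2 _ _ hdx hY1 ht
  have hlt : ((d : ℝ) - 1) ^ t * (d * q * (H * B)) < (d : ℝ) ^ t := by
    refine lt_of_le_of_lt ?_ hgap
    exact mul_le_mul_of_nonneg_left hdY (pow_nonneg (by linarith) t)
  have := value_lower g d t hd2 hg q (H * B) hq1 hM1 hgM hlt
  zify
  exact_mod_cast this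

/-! ### Degrees and the conclusion -/

theorem exists_degree (g : ArithmeticFunction ℤ) (hfin : IsDP g) (hg : Nonconst g) :
    ∃ d, 2 ≤ d ∧ g d ≠ 0 ∧ ∀ i, d < i → g i = 0 := by
  obtain ⟨j, hj2, hj⟩ := hg
  obtain ⟨d, hd, hmax⟩ := Set.exists_max_image _ id hfin ⟨j, hj⟩
  refine ⟨d, hj2.trans (hmax j hj), hd, fun i hi => ?_⟩
  by_contra h
  exact absurd (hmax i h) (not_le.2 hi)

theorem mul_apply_degree (g h : ArithmeticFunction ℤ) (d e : ℕ) (hd0 : d ≠ 0) (he0 : e ≠ 0)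
    (hd : ∀ i, d < i → g i = 0) (he : ∀ i, e < i → h i = 0) :
    (g * h) (d * e) = g d * h e := by
  rw [ArithmeticFunction.mul_apply, Finset.sum_eq_single (d, e)]
  · rintro ⟨a, b⟩ hab hne
    rw [Nat.mem_divisorsAntidiagonal] at hab
    simp only at hab ⊢
    by_cases h1 : d < a
    · rw [hd a h1, zero_mul]
    by_cases h2 : e < b
    · rw [he b h2, mul_zero]
    exfalso
    apply hne
    have ha : a = d := by
      by_contra hne'
      have : a * b < d * e := Nat.mul_lt_mul_of_lt_of_le (by omega) (by omega) (by omega)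
      omega
    subst ha
    rw [Nat.eq_of_mul_eq_mul_left (by omega) hab.1]
  · intro h'
    simp [hd0, he0] at h'

theorem mul_apply_gt_degree (g h : ArithmeticFunction ℤ) (d e n : ℕ) (hn : d * e < n)
    (hd : ∀ i, d < i → g i = 0) (he : ∀ i, e < i → h i = 0) : (g * h) n = 0 := by
  rw [ArithmeticFunction.mul_apply]
  refine Finset.sum_eq_zero ?_
  rintro ⟨a, b⟩ hab
  rw [Nat.mem_divisorsAntidiagonal] at hab
  simp only at hab ⊢
  by_cases h1 : d < a
  · rw [hd a h1, zero_mul]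
  by_cases h2 : e < b
  · rw [he b h2, mul_zero]
  have : a * b ≤ d * e := Nat.mul_le_mul (by omega) (by omega)
  omega

end

/-- Stäckel–Ore type criterion. A Dirichlet polynomial with integer
coefficients, of composite degree `n`, with `k` relevant primes and height `H`, assuming
a value `P·q` with `P` prime at a sufficiently large argument, is irreducible. -/
theorem prime_value_irreducible
    (f : ArithmeticFunction ℤ) (hfin : IsDP f)
    (n : ℕ) (hn2 : 2 ≤ n) (hncomp : ¬ n.Prime)
    (hdeg : f n ≠ 0) (hdeg' : ∀ i : ℕ, n < i → f i = 0)
    (k : ℕ) (hk1 : 1 ≤ k)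
    (hk : {p : ℕ | p.Prime ∧ ∃ i : ℕ, f i ≠ 0 ∧ p ∣ i}.ncard = k)
    (H : ℤ) (hH1 : ∀ i : ℕ, f i ≠ 0 → |f i| ≤ H) (hH2 : ∃ i : ℕ, f i ≠ 0 ∧ |f i| = H)
    (P q : ℕ) (hP : P.Prime) (hq : 0 < q)
    (t : ℕ)
    (ht : ((n : ℝ) / (n.minFac : ℝ)) *
        Real.log (((n : ℝ) * (q : ℝ) * (H : ℝ) / (n.minFac : ℝ)) *
          ((n : ℝ) / 2) ^ ((k : ℝ) * (1 + Real.logb 3 (Real.logb 2 12) / 2))) < (t : ℝ))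
    (hval : (∑ᶠ i : ℕ, f i * (i : ℤ) ^ t).natAbs = P * q) :
    IrreducibleDP f := by
  rintro ⟨g, h, hgfin, hhfin, hgnc, hhnc, rfl⟩
  obtain ⟨d, hd2, hgd, hd⟩ := exists_degree g hgfin hgnc
  obtain ⟨e, he2, hhe, he⟩ := exists_degree h hhfin hhnc
  have hn : d * e = n := by
    rcases lt_trichotomy (d * e) n with hlt | heq | hgt
    · exact absurd (mul_apply_gt_degree g h d e n hlt hd he) hdeg
    · exact heq
    · have h1 := hdeg' _ hgt
      rw [mul_apply_degree g h d e (by omega) (by omega) hd he] at h1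
      exact absurd h1 (mul_ne_zero hgd hhe)
  have hHone : (1 : ℝ) ≤ H := by
    obtain ⟨i, hi0, hi⟩ := hH2
    rw [← hi]
    exact_mod_cast Int.one_le_abs hi0
  have hHR : ∀ i, |((g * h) i : ℝ)| ≤ H := by
    intro i
    by_cases hi : (g * h) i = 0
    · rw [hi, Int.cast_zero, abs_zero]; linarith
    · exact_mod_cast hH1 i hi
  have hvg := factor_value g h n d e k hd2 he2 hn hgd hhe hd he hk hk1 H hHR hHone q t hq ht
  have hvh := factor_value h g n e d k he2 hd2 (by rw [mul_comm, hn]) hhe hgd he hd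
    (by rwa [mul_comm h g]) hk1 H (by rwa [mul_comm h g]) hHone q t hq ht
  have hsum : ∑ᶠ i : ℕ, (g * h) i * (i : ℤ) ^ t =
      (∑ i ∈ Finset.Icc 1 d, g i * (i : ℤ) ^ t) * ∑ i ∈ Finset.Icc 1 e, h i * (i : ℤ) ^ t := by
    rw [finsum_eq_sum_of_support_subset (s := Finset.Icc 1 n)]
    · have := sum_mul (A := ℤ) (fun i => (i : ℤ) ^ t)
        (fun i j _ _ => by push_cast; rw [mul_pow]) g h n d e hn hd he
      simpa only [Int.cast_id] using this
    · intro i hi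
      have hi0 : (g * h) i ≠ 0 := left_ne_zero_of_mul hi
      rw [Finset.coe_Icc, Set.mem_Icc]
      refine ⟨Nat.one_le_iff_ne_zero.2 ?_, ?_⟩
      · rintro rfl; simp at hi0
      · by_contra hlt
        exact hi0 (hdeg' i (by omega))
  rw [hsum, Int.natAbs_mul] at hval
  generalize (∑ i ∈ Finset.Icc 1 d, g i * (i : ℤ) ^ t).natAbs = x at hval hvg
  generalize (∑ i ∈ Finset.Icc 1 e, h i * (i : ℤ) ^ t).natAbs = y at hval hvh
  have hPpos := hP.pos
  -- If `P ∣ x` then `x ≥ P`, so `x * y = P * q` gives `y ≤ q`; likewise for `y`.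
  rcases hP.dvd_mul.1 (Dvd.intro q hval.symm) with hx | hy
  · have hPx := Nat.le_of_dvd (by omega) hx
    nlinarith
  · have hPy := Nat.le_of_dvd (by omega) hy
    nlinarith

end DirichletPoly
end

section
/- Let f be a nonzero Dirichlet polynomial with integer coefficients a_i = f(i) whose degree n ≥ 2 is composite, let p be the smallest prime factor of n, let k ≥ 1 be the number of distinct prime numbers dividing at least one element of the support of f, and let H(f) = max{|a_i| : i ∈ supp f}. Suppose that |Σ_{i ∈ supp f} a_i·i^t| = P^ℓ·q with P a prime number, ℓ ≥ 2 and q positive integers, P ∤ q, and t an integer satisfying t > (n/p)·log( (n·q·H(f)/p) · (n/2)^{k·(1 + log₃(log₂ 12)/2)} ). If the real number ( ∏_{i ∈ supp f} i^{a_i·i^t} )^{1/P} is irrational (the product being a positive rational number with integer exponents a_i·i^t), then f cannot be written as a product of two nonconstant Dirichlet polynomials with integer coefficients. -/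
/-!
Suppose `f = g * h` with `g`, `h` nonconstant, of degrees `m`, `r`; then `m * r = n`. Since the
logarithmic sum `∑ f(i) i^t log i` obeys the Leibniz rule, `∏ i^(f(i) i^t)` equals
`A^(h(-t)) * B^(g(-t))` with `A`, `B` rational. Were both values `g(-t)`, `h(-t)` divisible by `P`,
its `P`-th root would be rational (`root_rational`). Hence one of them, say `g(-t)`, is prime to
`P`, so it divides `q` and `|g(-t)| ≤ q`.

This is contradicted by the leading term. With `N = n / p ≥ m` and `X = exp (t / N)` one has
`(i + 1)^t ≥ X i^t` for `i + 1 ≤ N`, so `∑_{i < m} i^t ≤ m^t / (X - 1)` and `|g(-t)| > q` as soon as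
`X ≥ 1 + B + q`, where `B` bounds the coefficients of `g` (`eval_lower`).

The bound `B` comes from Bombieri's inequality. Encode `i` by the exponents of the relevant primes
together with a homogenizing exponent `D - Ω(i)`; then `g` and `h` become homogeneous polynomials in
`k + 1` variables, of degrees `⌊log₂ m⌋` and `⌊log₂ r⌋`. In the Fischer norm `∑ α! |c_α|²` the
product of two homogeneous polynomials dominates the product of the norms: by Vandermonde's
identity the norm of a product is a sum of squares (`ker_sum`, `bombieri`). Comparing factorials
with multinomial coefficients yields `2 g(i)² ≤ n^(k+2) H²` (`height_bound`). For composite `n ≠ 4`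
this is small enough for the hypothesis on `t`; for `n = 4` the bound `|g(i)| ≤ H` is immediate.
-/

namespace DirichletPoly

variable {R : Type*}

section Auxiliary

open Finset

/-! ### Bombieri's inequality -/

/-- The one-variable kernel `∑_b [β = a + b] [γ = d + b] / b!`; at most `b = β - a` contributes. -/
noncomputable def ker (a d β γ : ℕ) : ℝ :=
  if a ≤ β ∧ β + d = γ + a then ((β - a).factorial : ℝ)⁻¹ else 0

/-- Vandermonde's identity, read as a decomposition of the one-variable Fischer kernel
`[β + γ = β' + γ'] (β + γ)! / (β! γ! β'! γ'!)` into products of a function of `(β, γ')` and the same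
function of `(β', γ)`. The pairs `(a, d)` are the diagonal entries of the `2 × 2` tables
with row sums `β, γ` and column sums `β', γ'`. -/
lemma ker_sum (D β γ β' γ' : ℕ) (hβ : β ≤ D) (hγ' : γ' ≤ D) :
    ∑ x ∈ range (D + 1) ×ˢ range (D + 1),
        ker x.1 x.2 β γ' * ker x.1 x.2 β' γ / (x.1.factorial * x.2.factorial) =
      if β + γ = β' + γ' then ((β + γ).factorial : ℝ) /
        (β.factorial * γ.factorial * (β'.factorial * γ'.factorial)) else 0 := by
  split_ifs with h
  · have hch : ((β + γ).factorial : ℝ) / (β.factorial * γ.factorial) =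
        ∑ a ∈ range (β + 1), (β'.choose a : ℝ) * (γ'.choose (β - a)) := by
      rw [← Nat.cast_add_choose, h, Nat.add_choose_eq, Finset.Nat.sum_antidiagonal_eq_sum_range_succ_mk]
      push_cast; rfl
    rw [← div_div, hch, Finset.sum_div, Finset.sum_product,
      ← Finset.sum_subset (s₁ := range (β + 1)) (s₂ := range (D + 1))]
    · refine Finset.sum_congr rfl fun a ha => ?_
      have ha : a ≤ β := by simpa [Nat.lt_succ_iff] using ha
      by_cases hb : β - a ≤ γ' ∧ a ≤ β'
      · rw [Finset.sum_eq_single (γ' - (β - a))]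
        · simp only [ker]
          rw [if_pos (by omega), if_pos (by omega), Nat.cast_choose ℝ hb.1, Nat.cast_choose ℝ hb.2]
          have := Nat.factorial_ne_zero
          field_simp
        · intro d _ hd
          simp only [ker]
          rw [if_neg (by omega)]; simp
        · intro hd; simp at hd; omega
      · rw [Finset.sum_eq_zero]
        · rcases not_and_or.1 hb with hb | hb
          · rw [Nat.choose_eq_zero_of_lt (n := γ') (by omega)]; simp
          · rw [Nat.choose_eq_zero_of_lt (n := β') (by omega)]; simp
        · intro d _
          simp only [ker]
          rcases not_and_or.1 hb with hb | hb
          · rw [if_neg (by omega)]; simp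
          · rw [if_neg (c := a ≤ β' ∧ _) (by omega)]; simp
    · intro a; simp; omega
    · intro a _ ha
      refine Finset.sum_eq_zero fun d _ => ?_
      simp at ha
      simp only [ker]
      rw [if_neg (by omega)]; simp
  · refine Finset.sum_eq_zero fun x _ => ?_
    simp only [ker]
    by_cases h1 : x.1 ≤ β ∧ β + x.2 = γ' + x.1
    · rw [if_neg (c := x.1 ≤ β' ∧ _) (by omega)]; simp
    · rw [if_neg h1]; simp

/-- Bombieri's inequality, in the form of a lower bound by a single pair of coefficients. The right
side is the Fischer norm `∑ α! |c_α|²` of the product of `∑ g i x^(e i)` and `∑ h j x^(e' j)`.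
Homogeneity enters only through `hA` and `hB`: no other exponent dominates that of `i₀`, resp.
`j₀`. -/
lemma bombieri {ι X : Type*} [Fintype ι] [DecidableEq ι] (A B : Finset X)
    (e e' : X → ι → ℕ) (g h : X → ℝ) (i₀ j₀ : X) (hi₀ : i₀ ∈ A) (hj₀ : j₀ ∈ B)
    (hA : ∀ i ∈ A, e i₀ ≤ e i → i = i₀) (hB : ∀ j ∈ B, e' j₀ ≤ e' j → j = j₀) :
    (∏ l, ((e i₀ l).factorial : ℝ)) * (∏ l, ((e' j₀ l).factorial : ℝ)) * (g i₀ * h j₀) ^ 2 ≤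
      ∑ x ∈ A ×ˢ B, ∑ y ∈ A ×ˢ B, if e x.1 + e' x.2 = e y.1 + e' y.2 then
        (∏ l, (((e x.1 + e' x.2) l).factorial : ℝ)) * (g x.1 * h x.2) * (g y.1 * h y.2) else 0 := by
  obtain ⟨D, hD⟩ : ∃ D, ∀ l, (∀ i ∈ A, e i l ≤ D) ∧ (∀ j ∈ B, e' j l ≤ D) := by
    refine ⟨∑ l, (∑ i ∈ A, e i l + ∑ j ∈ B, e' j l), fun l => ?_⟩
    have h1 := Finset.single_le_sum (f := fun l => ∑ i ∈ A, e i l + ∑ j ∈ B, e' j l)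
      (fun _ _ => Nat.zero_le _) (Finset.mem_univ l)
    refine ⟨fun i hi => ?_, fun j hj => ?_⟩
    · have := Finset.single_le_sum (f := fun i => e i l) (fun _ _ => Nat.zero_le _) hi
      omega
    · have := Finset.single_le_sum (f := fun i => e' i l) (fun _ _ => Nat.zero_le _) hj
      omega
  set w : (ι → ℕ) → ℝ := fun a => ∏ l, ((a l).factorial : ℝ) with hw
  have hwpos : ∀ a, 0 < w a := fun a => Finset.prod_pos fun l _ => by positivity
  set T := Fintype.piFinset (fun _ : ι => range (D + 1) ×ˢ range (D + 1)) with hT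
  set U : (ι → ℕ × ℕ) → X → X → ℝ := fun z i j => ∏ l, ker (z l).1 (z l).2 (e i l) (e' j l) with hU
  set V : (ι → ℕ × ℕ) → ℝ := fun z => ∏ l, (((z l).1.factorial : ℝ) * (z l).2.factorial) with hV
  have hVpos : ∀ a, 0 < V a := fun a => Finset.prod_pos fun l _ => by positivity
  -- the multivariate Fischer kernel is the product over the coordinates of those in `ker_sum`
  have key : ∀ i ∈ A, ∀ j ∈ B, ∀ i' ∈ A, ∀ j' ∈ B,
      (if e i + e' j = e i' + e' j' then w (e i + e' j) else 0) =
        ∑ z ∈ T, (U z i j' * (w (e i) * w (e' j'))) * (U z i' j * (w (e i') * w (e' j))) / V z := by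
    intro i hi j hj i' hi' j' hj'
    have h1 := fun l => ker_sum D (e i l) (e' j l) (e i' l) (e' j' l) ((hD l).1 i hi)
      ((hD l).2 j' hj')
    have h2 := Finset.prod_congr (s₁ := univ) rfl fun l _ => h1 l
    rw [Finset.prod_univ_sum] at h2
    have h3 : ∑ z ∈ T, U z i j' * U z i' j / V z =
        (if e i + e' j = e i' + e' j' then w (e i + e' j) else 0) /
          (w (e i) * w (e' j) * (w (e i') * w (e' j'))) := by
      simp only [hU, hV, ← Finset.prod_mul_distrib, ← Finset.prod_div_distrib]
      refine h2.trans ?_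
      split_ifs with hc
      · simp only [hw, ← Finset.prod_mul_distrib, ← Finset.prod_div_distrib]
        refine Finset.prod_congr rfl fun l _ => ?_
        rw [if_pos (by simpa using congrFun hc l)]; rfl
      · obtain ⟨l, hl⟩ := Function.ne_iff.1 hc
        rw [Finset.prod_eq_zero (Finset.mem_univ l), zero_div]
        exact if_neg hl
    rw [eq_div_iff (by have := hwpos; exact (mul_pos (mul_pos (this _) (this _)) (mul_pos (this _) (this _))).ne')] at h3
    rw [← h3, Finset.sum_mul]
    refine Finset.sum_congr rfl fun z _ => by ring
  have hsq : ∑ x ∈ A ×ˢ B, ∑ y ∈ A ×ˢ B, (if e x.1 + e' x.2 = e y.1 + e' y.2 then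
        w (e x.1 + e' x.2) * (g x.1 * h x.2) * (g y.1 * h y.2) else 0) =
      ∑ z ∈ T, (∑ i ∈ A, ∑ j ∈ B, U z i j * (w (e i) * w (e' j)) * (g i * h j)) ^ 2 / V z := by
    have : ∀ x ∈ A ×ˢ B, ∀ y ∈ A ×ˢ B, (if e x.1 + e' x.2 = e y.1 + e' y.2 then
        w (e x.1 + e' x.2) * (g x.1 * h x.2) * (g y.1 * h y.2) else 0) =
        ∑ z ∈ T, (U z x.1 y.2 * (w (e x.1) * w (e' y.2)) * (g x.1 * h y.2)) *
          (U z y.1 x.2 * (w (e y.1) * w (e' x.2)) * (g y.1 * h x.2)) / V z := by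
      intro x hx y hy
      rw [Finset.mem_product] at hx hy
      have := key x.1 hx.1 x.2 hx.2 y.1 hy.1 y.2 hy.2
      calc _ = (if e x.1 + e' x.2 = e y.1 + e' y.2 then w (e x.1 + e' x.2) else 0) *
            ((g x.1 * h x.2) * (g y.1 * h y.2)) := by split_ifs <;> ring
        _ = _ := by
          rw [this, Finset.sum_mul]
          exact Finset.sum_congr rfl fun z _ => by ring
    rw [Finset.sum_congr rfl fun x hx => Finset.sum_congr rfl fun y hy => this x hx y hy]
    rw [Finset.sum_congr rfl fun x _ => Finset.sum_comm, Finset.sum_comm]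
    refine Finset.sum_congr rfl fun z _ => ?_
    simp only [← Finset.sum_div]
    congr 1
    simp only [Finset.sum_product]
    rw [pow_two, Finset.sum_mul_sum]
    refine Finset.sum_congr rfl fun i _ => ?_
    rw [Finset.sum_comm]
    refine Finset.sum_congr rfl fun i' _ => ?_
    rw [Finset.sum_mul_sum, Finset.sum_comm]
  rw [hsq]
  -- only the summand with diagonal `(e i₀, e' j₀)` is kept; there the inner sum has a single term
  set z₀ : ι → ℕ × ℕ := fun l => (e i₀ l, e' j₀ l) with hz₀
  have hz₀T : z₀ ∈ T := by
    simp only [hT, hz₀, Fintype.mem_piFinset, Finset.mem_product, Finset.mem_range, Nat.lt_succ_iff]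
    exact fun l => ⟨(hD l).1 _ hi₀, (hD l).2 _ hj₀⟩
  refine le_trans (le_of_eq ?_) (Finset.single_le_sum (fun z _ => div_nonneg (sq_nonneg _) (hVpos z).le) hz₀T)
  have hne : ∀ i ∈ A, ∀ j ∈ B, U z₀ i j ≠ 0 → i = i₀ ∧ j = j₀ := by
    intro i hi j hj hne
    have h1 : ∀ l, e i₀ l ≤ e i l ∧ e i l + e' j₀ l = e' j l + e i₀ l := by
      intro l
      by_contra hcon
      refine hne (Finset.prod_eq_zero (Finset.mem_univ l) ?_)
      exact if_neg hcon
    exact ⟨hA i hi fun l => (h1 l).1, hB j hj fun l => by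
      have := h1 l
      change e' j₀ l ≤ e' j l
      omega⟩
  have hU1 : U z₀ i₀ j₀ = 1 := by
    refine Finset.prod_eq_one fun l _ => ?_
    simp [ker, hz₀, add_comm]
  rw [Finset.sum_eq_single i₀, Finset.sum_eq_single j₀, hU1]
  · have hVz : V z₀ = w (e i₀) * w (e' j₀) := by
      simp only [hV, hw, hz₀, Finset.prod_mul_distrib]
    rw [hVz, eq_div_iff (mul_pos (hwpos _) (hwpos _)).ne']
    ring
  · intro j hj hjne
    have : U z₀ i₀ j = 0 := by by_contra hc; exact hjne (hne _ hi₀ _ hj hc).2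
    simp [this]
  · exact fun hc => absurd hj₀ hc
  · intro i hi hine
    refine Finset.sum_eq_zero fun j hj => ?_
    have : U z₀ i j = 0 := by by_contra hc; exact hine (hne _ hi _ hj hc).1
    simp [this]
  · exact fun hc => absurd hi₀ hc

/-! ### Leading terms of a product -/

/-- A support element that is lexicographically largest for `(v i, i)`. -/
lemma exists_top (g : ArithmeticFunction ℤ) (hg : IsDP g) (hg0 : ∃ i, g i ≠ 0) (v : ℕ → ℕ) :
    ∃ i₀, g i₀ ≠ 0 ∧ ∀ i, g i ≠ 0 → v i < v i₀ ∨ (v i = v i₀ ∧ i ≤ i₀) := by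
  obtain ⟨i, hi⟩ := hg0
  obtain ⟨i₀, h1, h2⟩ := Finset.exists_max_image hg.toFinset
    (fun i => toLex (v i, i)) ⟨i, hg.mem_toFinset.2 hi⟩
  refine ⟨i₀, hg.mem_toFinset.1 h1, fun i hi => ?_⟩
  have := h2 i (hg.mem_toFinset.2 hi)
  rw [Prod.Lex.le_iff] at this
  simpa using this

lemma pos_of_ne {g : ArithmeticFunction ℤ} {i : ℕ} (h : g i ≠ 0) : 0 < i := by
  rcases Nat.eq_zero_or_pos i with rfl | h'
  · simp at h
  · exact h'

lemma mul_top (g h : ArithmeticFunction ℤ) (v : ℕ → ℕ)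
    (hv : ∀ i j, 0 < i → 0 < j → v (i * j) = v i + v j) (i₀ j₀ : ℕ)
    (hi₀ : g i₀ ≠ 0) (hj₀ : h j₀ ≠ 0)
    (hi : ∀ i, g i ≠ 0 → v i < v i₀ ∨ (v i = v i₀ ∧ i ≤ i₀))
    (hj : ∀ j, h j ≠ 0 → v j < v j₀ ∨ (v j = v j₀ ∧ j ≤ j₀)) :
    (g * h) (i₀ * j₀) = g i₀ * h j₀ := by
  have p1 := pos_of_ne hi₀
  have p2 := pos_of_ne hj₀
  rw [ArithmeticFunction.mul_apply, Finset.sum_eq_single (i₀, j₀)]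
  · rintro ⟨i, j⟩ hij hne
    by_contra hcon
    obtain ⟨c1, c2⟩ := mul_ne_zero_iff.1 hcon
    have q1 := pos_of_ne c1
    have q2 := pos_of_ne c2
    have he : i * j = i₀ * j₀ := (Nat.mem_divisorsAntidiagonal.1 hij).1
    have hve : v i + v j = v i₀ + v j₀ := by rw [← hv _ _ q1 q2, ← hv _ _ p1 p2, he]
    have d1 := hi i c1
    have d2 := hj j c2
    have l1 : i ≤ i₀ := by omega
    have l2 : j ≤ j₀ := by omega
    apply hne
    have : i = i₀ := by nlinarith
    subst this
    have : j = j₀ := Nat.eq_of_mul_eq_mul_left q1 he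
    rw [this]
  · intro hc
    exact absurd (Nat.mem_divisorsAntidiagonal.2 ⟨rfl, (Nat.mul_pos p1 p2).ne'⟩) hc

/-- Every relevant prime of a factor is relevant for the product: look at the support elements with
the largest exponent of `p`. -/
lemma relevant_of_factor (g h : ArithmeticFunction ℤ) (hg : IsDP g) (hh : IsDP h)
    (hh0 : ∃ j, h j ≠ 0) (p : ℕ) (hp : p.Prime) (i : ℕ) (hi : g i ≠ 0) (hpi : p ∣ i) :
    ∃ x, (g * h) x ≠ 0 ∧ p ∣ x := by
  obtain ⟨i₀, hi₀, hmi⟩ := exists_top g hg ⟨i, hi⟩ (fun i => i.factorization p)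
  obtain ⟨j₀, hj₀, hmj⟩ := exists_top h hh hh0 (fun i => i.factorization p)
  refine ⟨i₀ * j₀, ?_, ?_⟩
  · rw [mul_top g h _ ?_ i₀ j₀ hi₀ hj₀ hmi hmj]
    · exact mul_ne_zero hi₀ hj₀
    · intro i j hi hj
      simp [Nat.factorization_mul hi.ne' hj.ne']
  · have h1 := hp.factorization_pos_of_dvd (pos_of_ne hi).ne' hpi
    have h2 := hmi i hi
    exact Dvd.dvd.mul_right (Nat.dvd_of_factorization_pos (by omega)) _

lemma degree_mul (g h : ArithmeticFunction ℤ) (hg : IsDP g) (hh : IsDP h)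
    (hgn : Nonconst g) (hhn : Nonconst h) (n : ℕ) (hdeg : (g * h) n ≠ 0)
    (hdeg' : ∀ i : ℕ, n < i → (g * h) i = 0) :
    ∃ m r, 2 ≤ m ∧ 2 ≤ r ∧ m * r = n ∧ g m ≠ 0 ∧ h r ≠ 0 ∧
      (∀ i, g i ≠ 0 → i ≤ m) ∧ (∀ j, h j ≠ 0 → j ≤ r) := by
  obtain ⟨i, hi2, hi⟩ := hgn
  obtain ⟨j, hj2, hj⟩ := hhn
  obtain ⟨m, hm, hmi⟩ := exists_top g hg ⟨i, hi⟩ (fun _ => 0)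
  obtain ⟨r, hr, hmj⟩ := exists_top h hh ⟨j, hj⟩ (fun _ => 0)
  have htop := mul_top g h _ (by simp) m r hm hr hmi hmj
  simp only [lt_irrefl, true_and, false_or] at hmi hmj
  refine ⟨m, r, hi2.trans (hmi i hi), hj2.trans (hmj j hj), ?_, hm, hr, hmi, hmj⟩
  apply le_antisymm
  · by_contra hc
    exact mul_ne_zero hm hr (htop ▸ hdeg' _ (not_le.1 hc))
  · rw [ArithmeticFunction.mul_apply] at hdeg
    obtain ⟨⟨a, b⟩, hab, hne⟩ := Finset.exists_ne_zero_of_sum_ne_zero hdeg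
    obtain ⟨c1, c2⟩ := mul_ne_zero_iff.1 hne
    rw [← (Nat.mem_divisorsAntidiagonal.1 hab).1]
    exact Nat.mul_le_mul (hmi a c1) (hmj b c2)

/-! ### Bounds for factorials -/

/-- A multinomial coefficient in `c` variables of degree `d` is at most `c ^ d`. -/
lemma factorial_sum_le {ι : Type*} [Fintype ι] [DecidableEq ι] (a : ι → ℕ) :
    (∑ l, a l).factorial ≤ (Fintype.card ι) ^ (∑ l, a l) * ∏ l, (a l).factorial := by
  rw [← Nat.multinomial_spec, mul_comm]
  refine Nat.mul_le_mul_right _ ?_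
  have := Finset.sum_pow_eq_sum_piAntidiag (univ : Finset ι) (fun _ => (1 : ℕ)) (∑ l, a l)
  simp only [sum_const, smul_eq_mul, mul_one, one_pow, Finset.prod_const_one, Nat.cast_id,
    Finset.card_univ] at this
  rw [this]
  refine Finset.single_le_sum (f := fun k => Nat.multinomial univ k)
    (fun _ _ => Nat.zero_le _) ?_
  simp

lemma choose_le (D j : ℕ) (hj : 1 ≤ j) (hD : 1 ≤ D) : 2 * D.choose j ≤ 2 ^ D := by
  obtain ⟨j, rfl⟩ := Nat.exists_eq_add_of_le' hj
  obtain ⟨D, rfl⟩ := Nat.exists_eq_add_of_le' hD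
  rw [Nat.choose_succ_succ, pow_succ, mul_comm]
  refine Nat.mul_le_mul_right _ ?_
  by_cases h : j + 1 ≤ D
  · rw [← Nat.sum_range_choose, ← Finset.sum_pair (f := fun i => D.choose i) (a := j) (b := j + 1) (by omega)]
    refine Finset.sum_le_sum_of_subset ?_
    intro x; simp; omega
  · rw [Nat.choose_eq_zero_of_lt (k := j + 1) (by omega)]
    exact Nat.choose_le_two_pow _ _

open ArithmeticFunction in
lemma two_pow_cardFactors_le (i : ℕ) (hi : 0 < i) : 2 ^ cardFactors i ≤ i := by
  rw [cardFactors_apply]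
  conv_rhs => rw [← Nat.prod_primeFactorsList hi.ne']
  exact List.pow_card_le_prod _ 2 fun p hp => (Nat.prime_of_mem_primeFactorsList hp).two_le

/-! ### Heights of factors -/

/-- The exponent vector of the homogenized monomial of `x` in degree `D`: the exponents of the
primes in `S`, and `D - Ω(x)` for the homogenizing variable `none`. It is meaningful when
`Ω(x) ≤ D` and all primes dividing `x` lie in `S`. -/
noncomputable def expo (S : Finset ℕ) (D x : ℕ) : Option S → ℕ
  | none => D - ArithmeticFunction.cardFactors x
  | some p => x.factorization p

lemma expo_sum (S : Finset ℕ) (D x : ℕ) (hx : x.primeFactors ⊆ S)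
    (hD : ArithmeticFunction.cardFactors x ≤ D) : ∑ l, expo S D x l = D := by
  have h : ∑ p : S, x.factorization p = ArithmeticFunction.cardFactors x := by
    rw [ArithmeticFunction.cardFactors_eq_sum_factorization, Finsupp.sum,
      Finset.sum_coe_sort S (fun p => x.factorization p)]
    symm
    apply Finset.sum_subset
    · simpa using hx
    · intro p _ hp
      exact Finsupp.notMem_support_iff.1 hp
  rw [Fintype.sum_option]
  simp only [expo]
  omega

lemma expo_mul (S : Finset ℕ) (Dg Dh i j : ℕ) (hi : 0 < i) (hj : 0 < j)
    (h1 : ArithmeticFunction.cardFactors i ≤ Dg) (h2 : ArithmeticFunction.cardFactors j ≤ Dh) :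
    expo S Dg i + expo S Dh j = expo S (Dg + Dh) (i * j) := by
  funext l
  cases l with
  | none =>
    simp only [Pi.add_apply, expo, ArithmeticFunction.cardFactors_mul hi.ne' hj.ne']
    omega
  | some p => simp [expo, Nat.factorization_mul hi.ne' hj.ne']

lemma expo_inj (S : Finset ℕ) (D x y : ℕ) (hx0 : 0 < x) (hy0 : 0 < y) (hx : x.primeFactors ⊆ S)
    (hy : y.primeFactors ⊆ S) (h : expo S D x = expo S D y) : x = y := by
  refine Nat.eq_of_factorization_eq hx0.ne' hy0.ne' fun p => ?_
  by_cases hp : p ∈ S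
  · exact congrFun h (some ⟨p, hp⟩)
  · have h1 : p ∉ x.factorization.support := fun hc => hp (hx (by simpa using hc))
    have h2 : p ∉ y.factorization.support := fun hc => hp (hy (by simpa using hc))
    rw [Finsupp.notMem_support_iff.1 h1, Finsupp.notMem_support_iff.1 h2]

lemma mul_eq_sum (g h : ArithmeticFunction ℤ) (A B : Finset ℕ) (hA : ∀ i, g i ≠ 0 → i ∈ A)
    (hB : ∀ j, h j ≠ 0 → j ∈ B) (z : ℕ) (hz : 0 < z) :
    (g * h) z = ∑ x ∈ A ×ˢ B, if x.1 * x.2 = z then g x.1 * h x.2 else 0 := by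
  rw [ArithmeticFunction.mul_apply, ← Finset.sum_filter]
  apply Finset.sum_bij_ne_zero (fun a _ _ => a)
  · rintro ⟨a, b⟩ hab hne
    obtain ⟨c1, c2⟩ := mul_ne_zero_iff.1 hne
    simp only [Finset.mem_filter, Finset.mem_product]
    exact ⟨⟨hA _ c1, hB _ c2⟩, (Nat.mem_divisorsAntidiagonal.1 hab).1⟩
  · exact fun _ _ _ _ _ _ h => h
  · rintro ⟨a, b⟩ hab hne
    refine ⟨(a, b), Nat.mem_divisorsAntidiagonal.2 ⟨(Finset.mem_filter.1 hab).2, hz.ne'⟩, hne, rfl⟩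
  · exact fun _ _ _ => rfl

/-- Bombieri's inequality for the homogenizations of `g` and `h`. The Fischer norm of the product is
at most `(m r) D! H²`, the weights of `i₀` and of a support element of `h` are at least
`D_g! / (k + 1)^D_g` and `D_h! / (k + 1)^D_h`, and `D = D_g + D_h` satisfies `2 ^ D ≤ m r`. -/
lemma height_bound_s15 (g h : ArithmeticFunction ℤ) (hg : IsDP g) (hh : IsDP h) (m r : ℕ)
    (hm2 : 2 ≤ m) (hr2 : 2 ≤ r) (hgm : ∀ i, g i ≠ 0 → i ≤ m) (hhr : ∀ j, h j ≠ 0 → j ≤ r)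
    (hh0 : ∃ j, h j ≠ 0) (S : Finset ℕ)
    (hSg : ∀ i, g i ≠ 0 → i.primeFactors ⊆ S) (hSh : ∀ i, h i ≠ 0 → i.primeFactors ⊆ S)
    (hSf : ∀ i, (g * h) i ≠ 0 → i.primeFactors ⊆ S) (H : ℝ) 
    (hH : ∀ x, |((g * h) x : ℝ)| ≤ H) (i₀ : ℕ) :
    2 * (g i₀ : ℝ) ^ 2 ≤ ((m * r : ℕ) : ℝ) ^ (S.card + 2) * H ^ 2 := by
  classical
  by_cases hi₀ : g i₀ = 0
  · rw [hi₀]; simp; positivity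
  obtain ⟨j₀, hj₀⟩ := hh0
  set Dg := Nat.log 2 m with hDg
  set Dh := Nat.log 2 r with hDh
  have hΩg : ∀ i, g i ≠ 0 → ArithmeticFunction.cardFactors i ≤ Dg := fun i hi =>
    Nat.le_log_of_pow_le (by norm_num) ((two_pow_cardFactors_le i (pos_of_ne hi)).trans (hgm i hi))
  have hΩh : ∀ i, h i ≠ 0 → ArithmeticFunction.cardFactors i ≤ Dh := fun i hi =>
    Nat.le_log_of_pow_le (by norm_num) ((two_pow_cardFactors_le i (pos_of_ne hi)).trans (hhr i hi))
  set A := hg.toFinset with hA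
  set B := hh.toFinset with hB
  have mA : ∀ i, i ∈ A ↔ g i ≠ 0 := fun i => hg.mem_toFinset
  have mB : ∀ i, i ∈ B ↔ h i ≠ 0 := fun i => hh.mem_toFinset
  have anti : ∀ (D x y : ℕ), 0 < x → 0 < y → x.primeFactors ⊆ S → y.primeFactors ⊆ S →
      ArithmeticFunction.cardFactors x ≤ D → ArithmeticFunction.cardFactors y ≤ D →
      expo S D x ≤ expo S D y → y = x := by
    intro D x y hx0 hy0 hx hy hxD hyD hle
    refine (expo_inj S D x y hx0 hy0 hx hy (funext fun l => ?_)).symm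
    have := (Finset.sum_eq_sum_iff_of_le (s := univ) (fun l _ => hle l)).1
      (by rw [expo_sum S D x hx hxD, expo_sum S D y hy hyD])
    exact this l (Finset.mem_univ l)
  have main := bombieri A B (expo S Dg) (expo S Dh) (fun i => (g i : ℝ)) (fun j => (h j : ℝ))
    i₀ j₀ ((mA _).2 hi₀) ((mB _).2 hj₀)
    (fun i hi hle => by
      rw [mA] at hi
      exact anti Dg i₀ i (pos_of_ne hi₀) (pos_of_ne hi) (hSg _ hi₀) (hSg _ hi) (hΩg _ hi₀)
        (hΩg _ hi) hle)
    (fun i hi hle => by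
      rw [mB] at hi
      exact anti Dh j₀ i (pos_of_ne hj₀) (pos_of_ne hi) (hSh _ hj₀) (hSh _ hi) (hΩh _ hj₀)
        (hΩh _ hi) hle)
  set w : ℕ → ℝ := fun z => ∏ l, ((expo S (Dg + Dh) z l).factorial : ℝ) with hw
  have hmulS : ∀ i j, g i ≠ 0 → h j ≠ 0 → (i * j).primeFactors ⊆ S := by
    intro i j hi hj
    rw [Nat.primeFactors_mul (pos_of_ne hi).ne' (pos_of_ne hj).ne']
    exact Finset.union_subset (hSg i hi) (hSh j hj)
  -- the Fischer norm of the product, regrouped by the value `z` of `x.1 * x.2`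
  have hrhs : (∑ x ∈ A ×ˢ B, ∑ y ∈ A ×ˢ B,
        if expo S Dg x.1 + expo S Dh x.2 = expo S Dg y.1 + expo S Dh y.2 then
          (∏ l, (((expo S Dg x.1 + expo S Dh x.2) l).factorial : ℝ)) *
            ((g x.1 : ℝ) * (h x.2 : ℝ)) * ((g y.1 : ℝ) * (h y.2 : ℝ)) else 0) =
      ∑ z ∈ Finset.Icc 1 (m * r), w z * ((g * h) z : ℝ) ^ 2 := by
    have e1 : ∀ x ∈ A ×ˢ B, ∀ y ∈ A ×ˢ B,
        (if expo S Dg x.1 + expo S Dh x.2 = expo S Dg y.1 + expo S Dh y.2 then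
          (∏ l, (((expo S Dg x.1 + expo S Dh x.2) l).factorial : ℝ)) *
            ((g x.1 : ℝ) * (h x.2 : ℝ)) * ((g y.1 : ℝ) * (h y.2 : ℝ)) else 0) =
        ∑ z ∈ Finset.Icc 1 (m * r), w z * ((if x.1 * x.2 = z then (g x.1 : ℝ) * (h x.2 : ℝ) else 0) *
          (if y.1 * y.2 = z then (g y.1 : ℝ) * (h y.2 : ℝ) else 0)) := by
      intro x hx y hy
      rw [Finset.mem_product, mA, mB] at hx hy
      rw [expo_mul S Dg Dh x.1 x.2 (pos_of_ne hx.1) (pos_of_ne hx.2) (hΩg _ hx.1) (hΩh _ hx.2),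
        expo_mul S Dg Dh y.1 y.2 (pos_of_ne hy.1) (pos_of_ne hy.2) (hΩg _ hy.1) (hΩh _ hy.2)]
      rw [Finset.sum_eq_single (x.1 * x.2)]
      · rw [if_pos rfl]
        by_cases hc : y.1 * y.2 = x.1 * x.2
        · rw [if_pos (by rw [hc]), if_pos hc]; ring
        · rw [if_neg hc, if_neg]
          · simp
          · intro hc'
            exact hc (expo_inj S _ _ _ (Nat.mul_pos (pos_of_ne hx.1) (pos_of_ne hx.2))
              (Nat.mul_pos (pos_of_ne hy.1) (pos_of_ne hy.2)) (hmulS _ _ hx.1 hx.2)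
              (hmulS _ _ hy.1 hy.2) hc').symm
      · intro z _ hz
        rw [if_neg (Ne.symm hz)]; simp
      · intro hc
        exfalso
        refine hc (Finset.mem_Icc.2 ⟨Nat.mul_pos (pos_of_ne hx.1) (pos_of_ne hx.2), ?_⟩)
        exact Nat.mul_le_mul (hgm _ hx.1) (hhr _ hx.2)
    rw [Finset.sum_congr rfl fun x hx => Finset.sum_congr rfl fun y hy => e1 x hx y hy]
    rw [Finset.sum_congr rfl fun x _ => Finset.sum_comm, Finset.sum_comm]
    refine Finset.sum_congr rfl fun z hz => ?_
    rw [mul_eq_sum g h A B (fun i => (mA i).2) (fun i => (mB i).2) z (Finset.mem_Icc.1 hz).1]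
    push_cast
    rw [pow_two, Finset.sum_mul_sum, Finset.mul_sum]
    exact Finset.sum_congr rfl fun x _ => by rw [Finset.mul_sum]
  rw [hrhs] at main
  have hup : ∑ z ∈ Finset.Icc 1 (m * r), w z * ((g * h) z : ℝ) ^ 2 ≤
      ((m * r : ℕ) : ℝ) * ((Dg + Dh).factorial * H ^ 2) := by
    refine (Finset.sum_le_card_nsmul _ _ (((Dg + Dh).factorial : ℝ) * H ^ 2) ?_).trans ?_
    · intro z hz
      by_cases hf : (g * h) z = 0
      · rw [hf]; simp; positivity
      · have hz0 := pos_of_ne hf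
        have hΩ : ArithmeticFunction.cardFactors z ≤ Dg + Dh := by
          rw [ArithmeticFunction.mul_apply] at hf
          obtain ⟨⟨a, b⟩, hab, hne⟩ := Finset.exists_ne_zero_of_sum_ne_zero hf
          obtain ⟨c1, c2⟩ := mul_ne_zero_iff.1 hne
          rw [← (Nat.mem_divisorsAntidiagonal.1 hab).1, ArithmeticFunction.cardFactors_mul
            (pos_of_ne c1).ne' (pos_of_ne c2).ne']
          exact Nat.add_le_add (hΩg _ c1) (hΩh _ c2)
        have hwz : w z ≤ (Dg + Dh).factorial := by
          have := Nat.le_of_dvd (Nat.factorial_pos _)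
            (Nat.prod_factorial_dvd_factorial_sum univ (expo S (Dg + Dh) z))
          rw [expo_sum S _ z (hSf z hf) hΩ] at this
          simp only [hw]
          exact_mod_cast this
        have h2 : ((g * h) z : ℝ) ^ 2 ≤ H ^ 2 := by
          rw [← sq_abs]; exact pow_le_pow_left₀ (abs_nonneg _) (hH z) 2
        exact mul_le_mul hwz h2 (sq_nonneg _) (by positivity)
    · simp
  have hk : Fintype.card (Option S) = S.card + 1 := by simp
  have l1 : ((Dg.factorial : ℕ) : ℝ) ≤ (S.card + 1 : ℝ) ^ Dg *
      ∏ l, ((expo S Dg i₀ l).factorial : ℝ) := by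
    have := factorial_sum_le (expo S Dg i₀)
    rw [expo_sum S Dg i₀ (hSg _ hi₀) (hΩg _ hi₀), hk] at this
    exact_mod_cast this
  have l2 : ((Dh.factorial : ℕ) : ℝ) ≤ (S.card + 1 : ℝ) ^ Dh *
      ∏ l, ((expo S Dh j₀ l).factorial : ℝ) := by
    have := factorial_sum_le (expo S Dh j₀)
    rw [expo_sum S Dh j₀ (hSh _ hj₀) (hΩh _ hj₀), hk] at this
    exact_mod_cast this
  set a := ∏ l, ((expo S Dg i₀ l).factorial : ℝ) with ha
  set d := ∏ l, ((expo S Dh j₀ l).factorial : ℝ) with hd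
  have hapos : 0 ≤ a := Finset.prod_nonneg fun _ _ => by positivity
  have hdpos : 0 ≤ d := Finset.prod_nonneg fun _ _ => by positivity
  have hj1 : (1 : ℝ) ≤ (h j₀ : ℝ) ^ 2 := by
    have : (1 : ℤ) ≤ (h j₀) ^ 2 := by have := sq_nonneg (h j₀); have := pow_ne_zero 2 hj₀; omega
    exact_mod_cast this
  have hchain : (Dg.factorial : ℝ) * Dh.factorial * (g i₀ : ℝ) ^ 2 ≤
      (S.card + 1 : ℝ) ^ (Dg + Dh) * (((m * r : ℕ) : ℝ) * ((Dg + Dh).factorial * H ^ 2)) := by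
    calc (Dg.factorial : ℝ) * Dh.factorial * (g i₀ : ℝ) ^ 2
        ≤ ((S.card + 1 : ℝ) ^ Dg * a) * ((S.card + 1 : ℝ) ^ Dh * d) * (g i₀ : ℝ) ^ 2 := by gcongr
      _ ≤ ((S.card + 1 : ℝ) ^ Dg * a) * ((S.card + 1 : ℝ) ^ Dh * d) *
          ((g i₀ : ℝ) ^ 2 * (h j₀ : ℝ) ^ 2) := by
          gcongr; exact le_mul_of_one_le_right (sq_nonneg _) hj1
      _ = (S.card + 1 : ℝ) ^ (Dg + Dh) * (a * d * ((g i₀ : ℝ) * (h j₀ : ℝ)) ^ 2) := by ring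
      _ ≤ _ := mul_le_mul_of_nonneg_left (main.trans hup) (by positivity)
  have hDh1 : 1 ≤ Dh := Nat.le_log_of_pow_le (by norm_num) (by simpa using hr2)
  have hc2 : (2 : ℝ) * (Dg + Dh).factorial ≤ 2 ^ (Dg + Dh) * (Dg.factorial * Dh.factorial) := by
    have e := Nat.add_choose_mul_factorial_mul_factorial Dg Dh
    have := choose_le (Dg + Dh) Dh hDh1 (by omega)
    have h3 : 2 * (Dg + Dh).factorial ≤ 2 ^ (Dg + Dh) * (Dg.factorial * Dh.factorial) := by
      rw [← e]
      calc _ = (2 * (Dg + Dh).choose Dh) * (Dg.factorial * Dh.factorial) := by ring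
        _ ≤ _ := Nat.mul_le_mul_right _ this
    exact_mod_cast h3
  have h2n : (2 : ℝ) ^ (Dg + Dh) ≤ ((m * r : ℕ) : ℝ) := by
    rw [pow_add]
    have := Nat.mul_le_mul (Nat.pow_log_le_self 2 (x := m) (by omega))
      (Nat.pow_log_le_self 2 (x := r) (by omega))
    exact_mod_cast this
  have hkn : (S.card + 1 : ℝ) ^ (Dg + Dh) ≤ ((m * r : ℕ) : ℝ) ^ S.card := by
    have : (S.card + 1 : ℝ) ≤ 2 ^ S.card := by
      exact_mod_cast Nat.lt_two_pow_self (n := S.card)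
    calc _ ≤ ((2 : ℝ) ^ S.card) ^ (Dg + Dh) := by gcongr
      _ = (2 ^ (Dg + Dh)) ^ S.card := by rw [← pow_mul, ← pow_mul, mul_comm]
      _ ≤ _ := by gcongr
  set N : ℝ := ((m * r : ℕ) : ℝ) with hN
  have hN0 : 0 ≤ N := by positivity
  have hfpos : (0 : ℝ) < Dg.factorial * Dh.factorial := by positivity
  refine le_of_mul_le_mul_left ?_ hfpos
  calc (Dg.factorial * Dh.factorial : ℝ) * (2 * (g i₀ : ℝ) ^ 2)
      = 2 * (Dg.factorial * Dh.factorial * (g i₀ : ℝ) ^ 2) := by ring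
    _ ≤ 2 * ((S.card + 1 : ℝ) ^ (Dg + Dh) * (N * ((Dg + Dh).factorial * H ^ 2))) := by gcongr
    _ = (S.card + 1 : ℝ) ^ (Dg + Dh) * (N * ((2 * (Dg + Dh).factorial) * H ^ 2)) := by ring
    _ ≤ N ^ S.card * (N * ((N * (Dg.factorial * Dh.factorial)) * H ^ 2)) := by
        refine mul_le_mul hkn (mul_le_mul_of_nonneg_left (mul_le_mul_of_nonneg_right ?_
          (sq_nonneg _)) hN0) (by positivity) (by positivity)
        exact hc2.trans (mul_le_mul_of_nonneg_right h2n hfpos.le)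
    _ = _ := by ring

/-! ### Lower bound for the value of a factor -/

lemma exp_mul_pow_le (N : ℝ) (t i : ℕ) (hi : (i : ℝ) + 1 ≤ N) :
    Real.exp (t / N) * (i : ℝ) ^ t ≤ ((i + 1 : ℕ) : ℝ) ^ t := by
  have hi1 : (0 : ℝ) < (i : ℝ) + 1 := by positivity
  have hN : 0 < N := hi1.trans_le hi
  have h1 : Real.exp (1 / N) * i ≤ (i : ℝ) + 1 := by
    have h2 : (i : ℝ) / (i + 1) ≤ Real.exp (-(1 / ((i : ℝ) + 1))) := by
      have := Real.one_sub_le_exp_neg (1 / ((i : ℝ) + 1))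
      have e : 1 - 1 / ((i : ℝ) + 1) = i / (i + 1) := by field_simp; ring
      rwa [e] at this
    have h3 : Real.exp (1 / N) ≤ Real.exp (1 / ((i : ℝ) + 1)) :=
      Real.exp_le_exp.2 (one_div_le_one_div_of_le hi1 hi)
    rw [Real.exp_neg, div_le_iff₀ hi1] at h2
    have h4 := Real.exp_pos (1 / ((i : ℝ) + 1))
    calc Real.exp (1 / N) * i ≤ Real.exp (1 / ((i : ℝ) + 1)) *
          ((Real.exp (1 / ((i : ℝ) + 1)))⁻¹ * (i + 1)) := by gcongr
      _ = (i : ℝ) + 1 := by field_simp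
  have e : Real.exp (t / N) = Real.exp (1 / N) ^ t := by
    rw [← Real.exp_nat_mul]; congr 1; ring
  rw [e, ← mul_pow]
  push_cast
  exact pow_le_pow_left₀ (by positivity) h1 t

lemma sum_pow_le (N : ℝ) (t j : ℕ) (hj : (j : ℝ) ≤ N) :
    (Real.exp (t / N) - 1) * ∑ i ∈ range j, (i : ℝ) ^ t ≤ (j : ℝ) ^ t := by
  induction j with
  | zero => simp
  | succ j ih =>
    have h1 := ih (le_trans (by push_cast; linarith) hj)
    have h2 := exp_mul_pow_le N t j (by exact_mod_cast hj)
    rw [Finset.sum_range_succ, mul_add]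
    linarith

/-- The leading term of `g(-t)` dominates: the lower terms add up to at most
`B m^t / (X - 1)` with `X = exp (t / N)`, and `m^t ≥ X`. -/
lemma eval_lower (g : ArithmeticFunction ℤ) (m t : ℕ) (hm2 : 2 ≤ m) (hgm : g m ≠ 0) (N B q : ℝ)
    (hmN : (m : ℝ) ≤ N) (hB : ∀ i, |(g i : ℝ)| ≤ B) (hq : 0 < q)
    (hX : 1 + B + q ≤ Real.exp (t / N)) :
    q < |∑ i ∈ Finset.Icc 1 m, (g i : ℝ) * (i : ℝ) ^ t| := by
  have hB0 : 0 ≤ B := (abs_nonneg _).trans (hB 0)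
  have e : ∑ i ∈ Finset.Icc 1 m, (g i : ℝ) * (i : ℝ) ^ t =
      ∑ i ∈ range (m + 1), (g i : ℝ) * (i : ℝ) ^ t := by
    apply Finset.sum_subset
    · intro i; simp
    · intro i hi hi'
      have : i = 0 := by simp at hi hi'; omega
      simp [this]
  rw [e, Finset.sum_range_succ]
  set X := Real.exp (t / N) with hXdef
  set s := ∑ i ∈ range m, (i : ℝ) ^ t with hs
  have hs1 : (X - 1) * s ≤ (m : ℝ) ^ t := sum_pow_le N t m hmN
  have hS : |∑ i ∈ range m, (g i : ℝ) * (i : ℝ) ^ t| ≤ B * s := by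
    refine (Finset.abs_sum_le_sum_abs _ _).trans ?_
    rw [hs, Finset.mul_sum]
    refine Finset.sum_le_sum fun i _ => ?_
    rw [abs_mul, abs_of_nonneg (a := (i : ℝ) ^ t) (by positivity)]
    exact mul_le_mul_of_nonneg_right (hB i) (by positivity)
  have hlead : (m : ℝ) ^ t ≤ |(g m : ℝ) * (m : ℝ) ^ t| := by
    rw [abs_mul, abs_of_nonneg (a := (m : ℝ) ^ t) (by positivity)]
    refine le_mul_of_one_le_left (by positivity) ?_
    exact_mod_cast Int.one_le_abs hgm
  have hmX : X ≤ (m : ℝ) ^ t := by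
    have hm2' : (2 : ℝ) ≤ m := by exact_mod_cast hm2
    have h1 := exp_mul_pow_le N t 1 (by push_cast; linarith)
    have h2 : ((1 + 1 : ℕ) : ℝ) ^ t ≤ (m : ℝ) ^ t :=
      pow_le_pow_left₀ (by positivity) (by exact_mod_cast hm2) t
    simp only [Nat.cast_one, one_pow, mul_one] at h1
    exact h1.trans h2
  have htri : |(g m : ℝ) * (m : ℝ) ^ t| ≤
      |∑ i ∈ range m, (g i : ℝ) * (i : ℝ) ^ t + (g m : ℝ) * (m : ℝ) ^ t| +
        |∑ i ∈ range m, (g i : ℝ) * (i : ℝ) ^ t| := by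
    have := abs_sub (∑ i ∈ range m, (g i : ℝ) * (i : ℝ) ^ t + (g m : ℝ) * (m : ℝ) ^ t)
      (∑ i ∈ range m, (g i : ℝ) * (i : ℝ) ^ t)
    simpa using this
  have hX1 : 0 < X - 1 := by linarith
  suffices q < (m : ℝ) ^ t - B * s by linarith
  refine lt_of_mul_lt_mul_left ?_ hX1.le
  have h5 : B * ((X - 1) * s) ≤ B * (m : ℝ) ^ t := mul_le_mul_of_nonneg_left hs1 hB0
  have h6 : q * X ≤ (X - 1 - B) * (m : ℝ) ^ t :=
    mul_le_mul (by linarith) hmX (Real.exp_pos _).le (by linarith)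
  nlinarith

/-- The factor by which the height of a divisor may exceed the height of a product of degree `n`
with `k` relevant primes. The general bound is too weak for `n = 4`, where both factors have
degree `2` and no loss occurs. -/
noncomputable def heightFactor (n k : ℕ) : ℝ := if n = 4 then 1 else √((n : ℝ) ^ (k + 2) / 2)

lemma coeff_bound (g h : ArithmeticFunction ℤ) (hg : IsDP g) (hh : IsDP h) (m r : ℕ)
    (hm2 : 2 ≤ m) (hr2 : 2 ≤ r) (hgm : ∀ i, g i ≠ 0 → i ≤ m) (hhr : ∀ j, h j ≠ 0 → j ≤ r)
    (hh0 : h r ≠ 0) (hg0 : g m ≠ 0) (S : Finset ℕ)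
    (hS : ∀ p : ℕ, p.Prime → ∀ i, (g * h) i ≠ 0 → p ∣ i → p ∈ S) (H : ℝ)
    (hH : ∀ x, |((g * h) x : ℝ)| ≤ H) (i : ℕ) :
    |(g i : ℝ)| ≤ heightFactor (m * r) S.card * H := by
  have hH0 : 0 ≤ H := (abs_nonneg _).trans (hH 0)
  unfold heightFactor
  split_ifs with h4
  · have hm : m = 2 := by nlinarith
    have hr : r = 2 := by nlinarith
    subst hm hr
    rw [one_mul]
    have aux : ∀ (x y : ℤ) (z : ℕ), y ≠ 0 → (g * h) z = x * y → |(x : ℝ)| ≤ H := by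
      intro x y z hy he
      refine le_trans ?_ (hH z)
      rw [he]; push_cast; rw [abs_mul]
      exact le_mul_of_one_le_right (abs_nonneg _) (by exact_mod_cast Int.one_le_abs hy)
    have g3 : g 4 = 0 := by by_contra hc; have := hgm 4 hc; omega
    have h3 : h 4 = 0 := by by_contra hc; have := hhr 4 hc; omega
    by_cases hi : g i = 0
    · rw [hi]; simpa using hH0
    have := pos_of_ne hi
    have := hgm i hi
    obtain rfl | rfl : i = 1 ∨ i = 2 := by omega
    · by_cases h1 : h 1 = 0
      · refine aux _ _ 2 hh0 ?_
        rw [ArithmeticFunction.mul_apply, show Nat.divisorsAntidiagonal 2 = {(1, 2), (2, 1)} by decide]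
        simp [h1]
      · exact aux _ _ 1 h1 (by simp [ArithmeticFunction.mul_apply])
    · refine aux _ _ 4 hh0 ?_
      rw [ArithmeticFunction.mul_apply,
        show Nat.divisorsAntidiagonal 4 = {(1, 4), (2, 2), (4, 1)} by decide]
      simp [g3, h3]
  · have hSg : ∀ i, g i ≠ 0 → i.primeFactors ⊆ S := by
      intro i hi p hp
      have hp' := Nat.prime_of_mem_primeFactors hp
      obtain ⟨x, hx, hpx⟩ := relevant_of_factor g h hg hh ⟨r, hh0⟩ p hp' i hi
        (Nat.dvd_of_mem_primeFactors hp)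
      exact hS p hp' x hx hpx
    have hSh : ∀ i, h i ≠ 0 → i.primeFactors ⊆ S := by
      intro i hi p hp
      have hp' := Nat.prime_of_mem_primeFactors hp
      obtain ⟨x, hx, hpx⟩ := relevant_of_factor h g hh hg ⟨m, hg0⟩ p hp' i hi
        (Nat.dvd_of_mem_primeFactors hp)
      exact hS p hp' x (by rwa [mul_comm g h]) hpx
    have := height_bound_s15 g h hg hh m r hm2 hr2 hgm hhr ⟨r, hh0⟩ S hSg hSh
      (fun i hi p hp => hS p (Nat.prime_of_mem_primeFactors hp) i hi
        (Nat.dvd_of_mem_primeFactors hp)) H hH i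
    apply abs_le_of_sq_le_sq _ (by positivity)
    rw [mul_pow, Real.sq_sqrt (by positivity)]
    linarith

/-- Uses only `n / p ≥ √n` and `log₃ (log₂ 12) ≥ 1`. -/
lemma heightFactor_add_two_le (n k : ℕ) (hn2 : 2 ≤ n) (hnc : ¬ n.Prime) (hk : 1 ≤ k) :
    heightFactor n k + 2 ≤ (n : ℝ) / n.minFac *
      ((n : ℝ) / 2) ^ ((k : ℝ) * (1 + Real.logb 3 (Real.logb 2 12) / 2)) := by
  have hn4 : 4 ≤ n := by
    by_contra hc
    interval_cases n <;> revert hnc <;> norm_num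
  have hn4' : (4 : ℝ) ≤ n := by exact_mod_cast hn4
  have hp0 : (0 : ℝ) < n.minFac := by exact_mod_cast n.minFac_pos
  set N : ℝ := (n : ℝ) / n.minFac with hN
  have hN0 : 0 < N := by positivity
  have hN2 : (n : ℝ) ≤ N ^ 2 := by
    have : (n.minFac : ℝ) ^ 2 ≤ n := by exact_mod_cast Nat.minFac_sq_le_self (by omega) hnc
    rw [hN, div_pow, le_div_iff₀ (by positivity)]
    nlinarith
  set C := ((n : ℝ) / 2) ^ ((k : ℝ) * (1 + Real.logb 3 (Real.logb 2 12) / 2)) with hC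
  have hc : (1 : ℝ) ≤ Real.logb 3 (Real.logb 2 12) := by
    have h3 : (3 : ℝ) ≤ Real.logb 2 12 := by
      rw [Real.le_logb_iff_rpow_le (by norm_num) (by norm_num)]; norm_num
    rw [Real.le_logb_iff_rpow_le (by norm_num) (by linarith)]; simpa using h3
  have hC0 : 0 < C := Real.rpow_pos_of_pos (by positivity) _
  have hC2 : ((n : ℝ) / 2) ^ (3 * k) ≤ C ^ 2 := by
    have h1 : ((n : ℝ) / 2) ^ ((k : ℝ) * (3 / 2)) ≤ C := by
      apply Real.rpow_le_rpow_of_exponent_le (by linarith)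
      have : (0 : ℝ) ≤ k := by positivity
      nlinarith
    calc ((n : ℝ) / 2) ^ (3 * k) = (((n : ℝ) / 2) ^ ((k : ℝ) * (3 / 2))) ^ 2 := by
          rw [← Real.rpow_natCast, ← Real.rpow_natCast, ← Real.rpow_mul (by positivity)]
          congr 1; push_cast; ring
      _ ≤ _ := pow_le_pow_left₀ (by positivity) h1 2
  have hNC : (n : ℝ) * ((n : ℝ) / 2) ^ (3 * k) ≤ (N * C) ^ 2 := by
    rw [mul_pow]; gcongr
  apply le_of_sq_le_sq _ (by positivity)
  refine le_trans ?_ hNC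
  obtain ⟨k, rfl⟩ := Nat.exists_eq_add_of_le' hk
  have hsplit : ((n : ℝ) / 2) ^ (3 * (k + 1)) = ((n : ℝ) ^ 3 / 8) * ((n : ℝ) ^ 3 / 8) ^ k := by
    rw [pow_mul, pow_succ, div_pow]; norm_num; ring
  rw [hsplit]
  unfold heightFactor
  split_ifs with h4
  · subst h4
    have : (1 : ℝ) ≤ (((4 : ℕ) : ℝ) ^ 3 / 8) ^ k := one_le_pow₀ (by norm_num)
    push_cast at this ⊢
    linarith
  · have hn6 : 6 ≤ n := by
      by_contra hc
      have : n = 5 := by omega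
      subst this
      exact hnc (by norm_num)
    have hn6' : (6 : ℝ) ≤ n := by exact_mod_cast hn6
    have h1 : (n : ℝ) ^ k ≤ ((n : ℝ) ^ 3 / 8) ^ k :=
      pow_le_pow_left₀ (by positivity) (by nlinarith [sq_nonneg ((n : ℝ) - 6)]) k
    set b := √((n : ℝ) ^ (k + 1 + 2) / 2) with hb
    have hb0 : 0 ≤ b := Real.sqrt_nonneg _
    have hb2 : b ^ 2 = (n : ℝ) ^ 3 * (n : ℝ) ^ k / 2 := by
      rw [hb, Real.sq_sqrt (by positivity)]; ring
    have hk1 : (1 : ℝ) ≤ (n : ℝ) ^ k := one_le_pow₀ (by linarith)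
    have hn3 : (216 : ℝ) ≤ (n : ℝ) ^ 3 := by
      calc (216 : ℝ) = 6 ^ 3 := by norm_num
        _ ≤ _ := pow_le_pow_left₀ (by norm_num) hn6' 3
    have hb108 : 108 ≤ b ^ 2 := by rw [hb2]; nlinarith
    have hb10 : 10 ≤ b := by nlinarith
    calc (b + 2) ^ 2 ≤ b ^ 2 * (6 / 4) := by nlinarith
      _ ≤ b ^ 2 * (n / 4) := by gcongr
      _ = (n : ℝ) * ((n : ℝ) ^ 3 / 8 * (n : ℝ) ^ k) := by rw [hb2]; ring
      _ ≤ _ := by gcongr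

/-- The size of `t` forces `|g(-t)| > q` for every nonconstant factor `g`. -/
lemma factor_value_gt (g h : ArithmeticFunction ℤ) (hg : IsDP g) (hh : IsDP h) (m r : ℕ)
    (hm2 : 2 ≤ m) (hr2 : 2 ≤ r) (hgm : ∀ i, g i ≠ 0 → i ≤ m) (hhr : ∀ j, h j ≠ 0 → j ≤ r)
    (hh0 : h r ≠ 0) (hg0 : g m ≠ 0) (S : Finset ℕ) (hS1 : 1 ≤ S.card)
    (hS : ∀ p : ℕ, p.Prime → ∀ i, (g * h) i ≠ 0 → p ∣ i → p ∈ S) (H q : ℝ) (hH1 : 1 ≤ H)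
    (hq1 : 1 ≤ q) (hH : ∀ x, |((g * h) x : ℝ)| ≤ H) (t n : ℕ) (hn : m * r = n)
    (ht : ((n : ℝ) / (n.minFac : ℝ)) *
        Real.log (((n : ℝ) * q * H / (n.minFac : ℝ)) *
          ((n : ℝ) / 2) ^ ((S.card : ℝ) * (1 + Real.logb 3 (Real.logb 2 12) / 2))) < (t : ℝ)) :
    q < |∑ i ∈ Finset.Icc 1 m, (g i : ℝ) * (i : ℝ) ^ t| := by
  have hn2 : 2 ≤ n := by nlinarith
  have hnc : ¬ n.Prime := by rw [← hn]; exact Nat.not_prime_mul (by omega) (by omega)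
  have hp0 : (0 : ℝ) < n.minFac := by exact_mod_cast n.minFac_pos
  have hn0 : (0 : ℝ) < n := by positivity
  have hmN : (m : ℝ) ≤ (n : ℝ) / n.minFac := by
    rw [le_div_iff₀ hp0]
    have h1 : n.minFac ≤ r := Nat.minFac_le_of_dvd hr2 ⟨m, by rw [← hn, mul_comm]⟩
    have h2 : m * n.minFac ≤ n := by rw [← hn] at h1 ⊢; exact Nat.mul_le_mul_left _ h1
    exact_mod_cast h2
  have hb := heightFactor_add_two_le n S.card hn2 hnc hS1
  have hcb := coeff_bound g h hg hh m r hm2 hr2 hgm hhr hh0 hg0 S hS H hH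
  rw [hn] at hcb
  refine eval_lower g m t hm2 hg0 _ (heightFactor n S.card * H) q hmN hcb (by linarith) ?_
  have hhf : 0 ≤ heightFactor n S.card := by
    unfold heightFactor; split_ifs <;> positivity
  set b := heightFactor n S.card with hbdef
  set C := ((n : ℝ) / 2) ^ ((S.card : ℝ) * (1 + Real.logb 3 (Real.logb 2 12) / 2)) with hC
  have hC0 : 0 < C := Real.rpow_pos_of_pos (by positivity) _
  set N : ℝ := (n : ℝ) / n.minFac with hN
  have hN0 : 0 < N := by positivity
  have hlog : Real.log (((n : ℝ) * q * H / (n.minFac : ℝ)) * C) < t / N := by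
    rw [lt_div_iff₀ hN0, mul_comm]; exact ht
  rw [Real.log_lt_iff_lt_exp (by positivity)] at hlog
  refine le_trans ?_ hlog.le
  have e : ((n : ℝ) * q * H / (n.minFac : ℝ)) * C = (q * H) * (N * C) := by rw [hN]; ring
  rw [e]
  have hqH : 1 ≤ q * H := one_le_mul_of_one_le_of_one_le hq1 hH1
  calc 1 + b * H + q ≤ q * H * (b + 2) := by 
        nlinarith [mul_nonneg hhf (by linarith : 0 ≤ H),
          mul_nonneg (mul_nonneg hhf (by linarith : 0 ≤ H)) (by linarith : 0 ≤ q - 1),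
          mul_nonneg (by linarith : 0 ≤ q) (by linarith : 0 ≤ H - 1)]
    _ ≤ q * H * (N * C) := by gcongr

/-! ### Values and logarithmic derivatives of products -/

/-- Regrouping of a sum against a Dirichlet convolution. -/
lemma sum_mul_eq (g h : ArithmeticFunction ℤ) (m r : ℕ)
    (hgm : ∀ i, g i ≠ 0 → i ≤ m) (hhr : ∀ j, h j ≠ 0 → j ≤ r) (φ : ℕ → ℝ) :
    ∑ z ∈ Finset.Icc 1 (m * r), ((g * h) z : ℝ) * φ z =
      ∑ i ∈ Finset.Icc 1 m, ∑ j ∈ Finset.Icc 1 r, ((g i : ℝ) * (h j : ℝ)) * φ (i * j) := by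
  have e1 : ∀ z ∈ Finset.Icc 1 (m * r), ((g * h) z : ℝ) * φ z =
      ∑ x ∈ Finset.Icc 1 m ×ˢ Finset.Icc 1 r,
        if x.1 * x.2 = z then ((g x.1 : ℝ) * (h x.2 : ℝ)) * φ z else 0 := by
    intro z hz
    rw [mul_eq_sum g h (Finset.Icc 1 m) (Finset.Icc 1 r)
      (fun i hi => Finset.mem_Icc.2 ⟨pos_of_ne hi, hgm i hi⟩)
      (fun i hi => Finset.mem_Icc.2 ⟨pos_of_ne hi, hhr i hi⟩) z (Finset.mem_Icc.1 hz).1]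
    push_cast
    rw [Finset.sum_mul]
    exact Finset.sum_congr rfl fun x _ => by split_ifs <;> simp
  rw [Finset.sum_congr rfl e1, Finset.sum_comm, Finset.sum_product]
  refine Finset.sum_congr rfl fun i hi => Finset.sum_congr rfl fun j hj => ?_
  rw [Finset.mem_Icc] at hi hj
  rw [Finset.sum_ite_eq, if_pos]
  exact Finset.mem_Icc.2 ⟨Nat.mul_pos hi.1 hj.1, Nat.mul_le_mul hi.2 hj.2⟩

lemma exp_sum_log_rational (g : ArithmeticFunction ℤ) (m t : ℕ) :
    ∃ a : ℚ, Real.exp (∑ i ∈ Finset.Icc 1 m, (g i : ℝ) * ((i : ℝ) ^ t * Real.log i)) = a := by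
  refine ⟨∏ i ∈ Finset.Icc 1 m, (i : ℚ) ^ (g i * (i : ℤ) ^ t), ?_⟩
  rw [Real.exp_sum]
  push_cast
  refine Finset.prod_congr rfl fun i hi => ?_
  have hi0 : (0 : ℝ) < i := by exact_mod_cast (Finset.mem_Icc.1 hi).1
  rw [← Real.rpow_intCast, Real.rpow_def_of_pos hi0]
  push_cast
  congr 1; ring

lemma finprod_eq_exp (f : ArithmeticFunction ℤ) (n t : ℕ) (hdeg' : ∀ i : ℕ, n < i → f i = 0) :
    ∏ᶠ i : ℕ, (i : ℝ) ^ (f i * (i : ℤ) ^ t) =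
      Real.exp (∑ i ∈ Finset.Icc 1 n, (f i : ℝ) * ((i : ℝ) ^ t * Real.log i)) := by
  rw [finprod_eq_prod_of_mulSupport_subset (s := Finset.Icc 1 n), Real.exp_sum]
  · refine Finset.prod_congr rfl fun i hi => ?_
    have hi0 : (0 : ℝ) < i := by exact_mod_cast (Finset.mem_Icc.1 hi).1
    rw [← Real.rpow_intCast, Real.rpow_def_of_pos hi0]
    push_cast
    congr 1; ring
  · intro i hi
    have hf : f i ≠ 0 := by intro hc; simp [hc] at hi
    have : i ≤ n := by by_contra hc; exact hf (hdeg' i (not_le.1 hc))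
    simpa using ⟨pos_of_ne hf, this⟩

lemma eval_mul (g h : ArithmeticFunction ℤ) (m r t : ℕ)
    (hgm : ∀ i, g i ≠ 0 → i ≤ m) (hhr : ∀ j, h j ≠ 0 → j ≤ r) :
    ∑ z ∈ Finset.Icc 1 (m * r), (g * h) z * (z : ℤ) ^ t =
      (∑ i ∈ Finset.Icc 1 m, g i * (i : ℤ) ^ t) * ∑ j ∈ Finset.Icc 1 r, h j * (j : ℤ) ^ t := by
  have h1 := sum_mul_eq g h m r hgm hhr (fun z => (z : ℝ) ^ t)
  have h2 : ((∑ z ∈ Finset.Icc 1 (m * r), (g * h) z * (z : ℤ) ^ t : ℤ) : ℝ) =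
      (((∑ i ∈ Finset.Icc 1 m, g i * (i : ℤ) ^ t) *
        ∑ j ∈ Finset.Icc 1 r, h j * (j : ℤ) ^ t : ℤ) : ℝ) := by
    push_cast
    rw [h1, Finset.sum_mul_sum]
    refine Finset.sum_congr rfl fun i _ => Finset.sum_congr rfl fun j _ => ?_
    push_cast; ring
  exact_mod_cast h2

/-- The Leibniz rule for the derivative at `s = -t`. -/
lemma log_sum_mul (g h : ArithmeticFunction ℤ) (m r t : ℕ)
    (hgm : ∀ i, g i ≠ 0 → i ≤ m) (hhr : ∀ j, h j ≠ 0 → j ≤ r) :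
    ∑ z ∈ Finset.Icc 1 (m * r), ((g * h) z : ℝ) * ((z : ℝ) ^ t * Real.log z) =
      ((∑ j ∈ Finset.Icc 1 r, h j * (j : ℤ) ^ t : ℤ) : ℝ) *
          (∑ i ∈ Finset.Icc 1 m, (g i : ℝ) * ((i : ℝ) ^ t * Real.log i)) +
        ((∑ i ∈ Finset.Icc 1 m, g i * (i : ℤ) ^ t : ℤ) : ℝ) *
          ∑ j ∈ Finset.Icc 1 r, (h j : ℝ) * ((j : ℝ) ^ t * Real.log j) := by
  rw [sum_mul_eq g h m r hgm hhr (fun z => (z : ℝ) ^ t * Real.log z)]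
  push_cast
  rw [mul_comm (∑ j ∈ Finset.Icc 1 r, (h j : ℝ) * (j : ℝ) ^ t), Finset.sum_mul_sum,
    Finset.sum_mul_sum, ← Finset.sum_add_distrib]
  refine Finset.sum_congr rfl fun i hi => ?_
  rw [← Finset.sum_add_distrib]
  refine Finset.sum_congr rfl fun j hj => ?_
  have hi0 : (i : ℝ) ≠ 0 := by
    have := (Finset.mem_Icc.1 hi).1
    positivity
  have hj0 : (j : ℝ) ≠ 0 := by
    have := (Finset.mem_Icc.1 hj).1
    positivity
  push_cast
  rw [Real.log_mul hi0 hj0]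
  ring

lemma root_rational (g h : ArithmeticFunction ℤ) (m r t P : ℕ) (hP : 0 < P)
    (hgm : ∀ i, g i ≠ 0 → i ≤ m) (hhr : ∀ j, h j ≠ 0 → j ≤ r)
    (hPg : (P : ℤ) ∣ ∑ i ∈ Finset.Icc 1 m, g i * (i : ℤ) ^ t)
    (hPh : (P : ℤ) ∣ ∑ j ∈ Finset.Icc 1 r, h j * (j : ℤ) ^ t) :
    ∃ a : ℚ, Real.exp (∑ z ∈ Finset.Icc 1 (m * r), ((g * h) z : ℝ) * ((z : ℝ) ^ t * Real.log z)) ^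
      ((1 : ℝ) / (P : ℝ)) = a := by
  obtain ⟨c, hc⟩ := hPg
  obtain ⟨d, hd⟩ := hPh
  obtain ⟨a, ha⟩ := exp_sum_log_rational g m t
  obtain ⟨b, hb⟩ := exp_sum_log_rational h r t
  refine ⟨a ^ d * b ^ c, ?_⟩
  rw [log_sum_mul g h m r t hgm hhr, hc, hd, ← Real.exp_mul]
  push_cast
  rw [← ha, ← hb, ← Real.rpow_intCast, ← Real.rpow_intCast, ← Real.exp_mul, ← Real.exp_mul,
    ← Real.exp_add]
  congr 1
  have hP' : (P : ℝ) ≠ 0 := by positivity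
  field_simp

lemma natAbs_le_of_not_dvd (G K : ℤ) (P ℓ q : ℕ) (hP : P.Prime) (hq : 0 < q)
    (hG : ¬ (P : ℤ) ∣ G) (hGK : (G * K).natAbs = P ^ ℓ * q) : G.natAbs ≤ q := by
  have hco : Nat.Coprime G.natAbs (P ^ ℓ) :=
    (Nat.Coprime.pow_left _ ((Nat.Prime.coprime_iff_not_dvd hP).2
      fun hc => hG (Int.natCast_dvd.2 hc))).symm
  have : G.natAbs ∣ P ^ ℓ * q := by rw [← hGK, Int.natAbs_mul]; exact dvd_mul_right _ _
  exact Nat.le_of_dvd hq (hco.dvd_of_dvd_mul_left this)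

end Auxiliary

/-- Weisner-type criterion. -/
theorem prime_power_value_irreducible
    (f : ArithmeticFunction ℤ) (hfin : IsDP f)
    (n : ℕ) (hn2 : 2 ≤ n) (hncomp : ¬ n.Prime)
    (hdeg : f n ≠ 0) (hdeg' : ∀ i : ℕ, n < i → f i = 0)
    (k : ℕ) (hk1 : 1 ≤ k)
    (hk : {p : ℕ | p.Prime ∧ ∃ i : ℕ, f i ≠ 0 ∧ p ∣ i}.ncard = k)
    (H : ℤ) (hH1 : ∀ i : ℕ, f i ≠ 0 → |f i| ≤ H) (hH2 : ∃ i : ℕ, f i ≠ 0 ∧ |f i| = H)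
    (P q ℓ : ℕ) (hP : P.Prime) (hq : 0 < q) (hPq : ¬ P ∣ q) (hℓ : 2 ≤ ℓ)
    (t : ℕ)
    (ht : ((n : ℝ) / (n.minFac : ℝ)) *
        Real.log (((n : ℝ) * (q : ℝ) * (H : ℝ) / (n.minFac : ℝ)) *
          ((n : ℝ) / 2) ^ ((k : ℝ) * (1 + Real.logb 3 (Real.logb 2 12) / 2))) < (t : ℝ))
    (hval : (∑ᶠ i : ℕ, f i * (i : ℤ) ^ t).natAbs = P ^ ℓ * q)
    (hirr : Irrational ((∏ᶠ i : ℕ, (i : ℝ) ^ (f i * (i : ℤ) ^ t)) ^ ((1 : ℝ) / (P : ℝ)))) :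
    IrreducibleDP f := by
  rintro ⟨g, h, hg, hh, hgn, hhn, rfl⟩
  obtain ⟨m, r, hm2, hr2, hn, hg0, hh0, hgm, hhr⟩ := degree_mul g h hg hh hgn hhn n hdeg hdeg'
  have hfinS : {p : ℕ | p.Prime ∧ ∃ i : ℕ, (g * h) i ≠ 0 ∧ p ∣ i}.Finite := by
    refine (Set.finite_Iic n).subset ?_
    rintro p ⟨_, i, hi, hpi⟩
    refine (Nat.le_of_dvd (pos_of_ne hi) hpi).trans ?_
    by_contra hc
    exact hi (hdeg' i (not_le.1 hc))
  rw [Set.ncard_eq_toFinset_card _ hfinS] at hk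
  set S := hfinS.toFinset with hS
  have hSmem : ∀ p : ℕ, p.Prime → ∀ i, (g * h) i ≠ 0 → p ∣ i → p ∈ S :=
    fun p hp i hi hpi => hfinS.mem_toFinset.2 ⟨hp, i, hi, hpi⟩
  have hH1' : (1 : ℝ) ≤ (H : ℝ) := by
    obtain ⟨i, hi, rfl⟩ := hH2
    exact_mod_cast Int.one_le_abs hi
  have hH' : ∀ x, |((g * h) x : ℝ)| ≤ (H : ℝ) := by
    intro x
    by_cases hx : (g * h) x = 0
    · rw [hx]; simp only [Int.cast_zero, abs_zero]; linarith
    · exact_mod_cast hH1 x hx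
  have hq1 : (1 : ℝ) ≤ (q : ℝ) := by exact_mod_cast hq
  rw [← hk] at ht hk1
  have hval' : ((∑ i ∈ Finset.Icc 1 m, g i * (i : ℤ) ^ t) *
      ∑ j ∈ Finset.Icc 1 r, h j * (j : ℤ) ^ t).natAbs = P ^ ℓ * q := by
    rw [← hval, ← eval_mul g h m r t hgm hhr, hn]
    congr 1
    symm
    apply finsum_eq_sum_of_support_subset
    intro i hi
    have hf : (g * h) i ≠ 0 := by intro hc; simp only [Function.mem_support, hc] at hi; simp at hi
    have : i ≤ n := by by_contra hc; exact hf (hdeg' i (not_le.1 hc))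
    simpa using ⟨pos_of_ne hf, this⟩
  by_cases hPg : (P : ℤ) ∣ ∑ i ∈ Finset.Icc 1 m, g i * (i : ℤ) ^ t
  · by_cases hPh : (P : ℤ) ∣ ∑ j ∈ Finset.Icc 1 r, h j * (j : ℤ) ^ t
    · obtain ⟨a, ha⟩ := root_rational g h m r t P hP.pos hgm hhr hPg hPh
      rw [finprod_eq_exp (g * h) n t hdeg', ← hn, ha] at hirr
      exact Rat.not_irrational a hirr
    · rw [mul_comm] at hval'
      have h1 := natAbs_le_of_not_dvd _ _ P ℓ q hP hq hPh hval'
      have h2 := factor_value_gt h g hh hg r m hr2 hm2 hhr hgm hg0 hh0 S hk1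
        (by rwa [mul_comm h g]) H q hH1' hq1 (by rwa [mul_comm h g]) t n (by rw [mul_comm, hn]) ht
      refine absurd h2 (not_lt.2 ?_)
      have h3 : |∑ j ∈ Finset.Icc 1 r, h j * (j : ℤ) ^ t| ≤ (q : ℤ) := by
        rw [Int.abs_eq_natAbs]; exact_mod_cast h1
      exact_mod_cast h3
  · have h1 := natAbs_le_of_not_dvd _ _ P ℓ q hP hq hPg hval'
    have h2 := factor_value_gt g h hg hh m r hm2 hr2 hgm hhr hh0 hg0 S hk1
      hSmem H q hH1' hq1 hH' t n hn ht
    refine absurd h2 (not_lt.2 ?_)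
    have h3 : |∑ i ∈ Finset.Icc 1 m, g i * (i : ℤ) ^ t| ≤ (q : ℤ) := by
      rw [Int.abs_eq_natAbs]; exact_mod_cast h1
    exact_mod_cast h3

end DirichletPoly
end

section
/- Let k ≥ 2 and n be integers such that some prime factor of n has multiplicity at least k in n; let q_k be the smallest prime number p with ν_p(n) ≥ k, and let n_{<k} = ∏_{p prime, ν_p(n) < k} p^{ν_p(n)} (an empty product being 1). Let R be a unique factorization domain and let f be a nonzero Dirichlet polynomial over R of degree n. If there exists an index i with n − min{n_{<k}, q_k}·q_k^{k−1} < i < n and f(i) ≠ 0, then f is k-power-free: there exist no Dirichlet polynomials g and h over R with g nonconstant and f = g^k·h. -/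
/-!
Suppose `f = g ^ k * h` with `deg g = m ≥ 2` and `deg h = l`, so that `n = m ^ k * l`. The two
largest elements of a support differ by at least `1` for `g` and `h`, and gaps propagate through
products: if nothing of the support of `u` lies strictly between `deg u - d` and `deg u`, and
likewise for `v` with `e`, then the gap of `u * v` is at least `min (d * deg v) (e * deg u)`
(`HasGap.mul`). Hence `g ^ k` has gap at least `m ^ (k - 1)`, and `f` has gap at least
`min l m * m ^ (k - 1)`.

Every prime factor of `m` has multiplicity at least `k` in `n`. Therefore `qk ≤ m`, and `nlt n k`
is coprime to `m`, so that it divides `l`. The gap of `f` is thus at least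
`min (nlt n k) qk * qk ^ (k - 1)`, which excludes the index `i`.
-/

namespace DirichletPoly

variable {R : Type*}

/-- `nlt n k` is `n_{<k}`, the product of the prime powers `p ^ ν_p(n)` over the primes
`p` whose multiplicity in `n` is less than `k`. -/
def nlt (n k : ℕ) : ℕ :=
  ∏ p ∈ n.primeFactors.filter (fun p => n.factorization p < k), p ^ n.factorization p

/-- `f` has degree `n`, and the rest of its support lies at distance at least `d` below `n`. -/
def HasGap [Zero R] (f : ArithmeticFunction R) (n d : ℕ) : Prop :=
  0 < d ∧ f n ≠ 0 ∧ ∀ i : ℕ, i ≠ n → f i ≠ 0 → i + d ≤ n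

theorem HasGap.pos [Zero R] {f : ArithmeticFunction R} {n d : ℕ} (hf : HasGap f n d) : 0 < n := by
  rcases Nat.eq_zero_or_pos n with rfl | h
  · exact absurd (by simp) hf.2.1
  · exact h

theorem exists_hasGap [Zero R] {f : ArithmeticFunction R} (hf : IsDP f) {j : ℕ} (hj : f j ≠ 0) :
    ∃ n, j ≤ n ∧ HasGap f n 1 := by
  obtain ⟨n, hn, hmax⟩ := Set.exists_max_image _ id hf ⟨j, hj⟩
  refine ⟨n, hmax j hj, one_pos, hn, fun i hi hfi => ?_⟩
  have : i ≤ n := hmax i hfi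
  omega

theorem HasGap.mul [CommRing R] [IsDomain R] {u v : ArithmeticFunction R} {a b d e c : ℕ}
    (hu : HasGap u a d) (hv : HasGap v b e) (hc : 0 < c) (hcd : c ≤ d * b) (hce : c ≤ e * a) :
    HasGap (u * v) (a * b) c := by
  -- A pair of support elements other than the pair of degrees has product at most `a * b - c`.
  have key : ∀ x y : ℕ, u x ≠ 0 → v y ≠ 0 → (x ≠ a ∨ y ≠ b) → x * y + c ≤ a * b := by
    intro x y hx hy h
    have hxa : x ≤ a := by
      by_cases hx' : x = a
      · exact hx'.le
      · have := hu.2.2 x hx' hx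
        omega
    have hyb : y ≤ b := by
      by_cases hy' : y = b
      · exact hy'.le
      · have := hv.2.2 y hy' hy
        omega
    rcases h with h | h
    · calc x * y + c ≤ x * b + d * b := by gcongr
        _ = (x + d) * b := by ring
        _ ≤ a * b := Nat.mul_le_mul_right _ (hu.2.2 x h hx)
    · calc x * y + c ≤ a * y + e * a := by gcongr
        _ = a * (y + e) := by ring
        _ ≤ a * b := Nat.mul_le_mul_left _ (hv.2.2 y h hy)
  have ha := hu.pos
  have hb := hv.pos
  refine ⟨hc, ?_, fun i hi hne => ?_⟩
  · rw [ArithmeticFunction.mul_apply, Finset.sum_eq_single (a, b)]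
    · exact mul_ne_zero hu.2.1 hv.2.1
    · rintro ⟨x, y⟩ hxy hne
      by_contra h0
      have hprod := (Nat.mem_divisorsAntidiagonal.mp hxy).1
      have hor : x ≠ a ∨ y ≠ b := by
        by_contra! hh
        exact hne (by rw [hh.1, hh.2])
      have := key x y (left_ne_zero_of_mul h0) (right_ne_zero_of_mul h0) hor
      simp only at hprod
      omega
    · intro hmem
      exact absurd (Nat.mem_divisorsAntidiagonal.mpr ⟨rfl, (Nat.mul_pos ha hb).ne'⟩) hmem
  · rw [ArithmeticFunction.mul_apply] at hne
    obtain ⟨⟨x, y⟩, hxy, h0⟩ := Finset.exists_ne_zero_of_sum_ne_zero hne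
    have hprod : x * y = i := (Nat.mem_divisorsAntidiagonal.mp hxy).1
    have hor : x ≠ a ∨ y ≠ b := by
      by_contra! hh
      exact hi (by rw [← hprod, hh.1, hh.2])
    rw [← hprod]
    exact key x y (left_ne_zero_of_mul h0) (right_ne_zero_of_mul h0) hor

theorem HasGap.pow [CommRing R] [IsDomain R] {g : ArithmeticFunction R} {m : ℕ}
    (hg : HasGap g m 1) (k : ℕ) : HasGap (g ^ (k + 1)) (m ^ (k + 1)) (m ^ k) := by
  induction k with
  | zero => simpa using hg
  | succ k ih =>
    rw [pow_succ g, pow_succ m (k + 1)]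
    exact ih.mul hg (pow_pos hg.pos _) (pow_succ m k).le (by rw [one_mul])

theorem HasGap.eq_of_degree [Zero R] {f : ArithmeticFunction R} {n N c : ℕ} (hf : HasGap f N c)
    (hdeg : f n ≠ 0) (hdeg' : ∀ i : ℕ, n < i → f i = 0) : N = n := by
  have h1 : N ≤ n := by
    by_contra! h
    exact hf.2.1 (hdeg' N h)
  by_contra h
  have := hf.2.2 n (Ne.symm h) hdeg
  have := hf.1
  omega

theorem nlt_dvd {n : ℕ} (hn : n ≠ 0) (k : ℕ) : nlt n k ∣ n := by
  conv_rhs => rw [← Nat.prod_factorization_pow_eq_self hn]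
  exact Finset.prod_dvd_prod_of_subset _ _ _ (Finset.filter_subset _ _)

/-- If `m ^ k` divides `n`, then every prime factor of `m` has multiplicity at least `k` in `n`,
hence does not occur in `nlt n k`. -/
theorem nlt_coprime {n m k : ℕ} (hn : n ≠ 0) (hm : m ^ k ∣ n) : (nlt n k).Coprime m := by
  refine Nat.Coprime.prod_left fun p hp => Nat.Coprime.pow_left _ ?_
  rw [Finset.mem_filter] at hp
  have hpp := Nat.prime_of_mem_primeFactors hp.1
  rw [hpp.coprime_iff_not_dvd]
  intro hpm
  have := (hpp.pow_dvd_iff_le_factorization hn).mp ((pow_dvd_pow_of_dvd hpm k).trans hm)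
  omega

/-- a `k`-power-freeness criterion. Here `qk` is the smallest prime
whose multiplicity in `n` is at least `k`. -/
theorem k_power_free_of_coeff
    [CommRing R] [IsDomain R] [UniqueFactorizationMonoid R]
    (k : ℕ) (hk : 2 ≤ k) (n : ℕ)
    (qk : ℕ) (hqk : qk.Prime) (hqkn : qk ^ k ∣ n)
    (hqkmin : ∀ q : ℕ, q.Prime → q ^ k ∣ n → qk ≤ q)
    (f : ArithmeticFunction R) (hfin : IsDP f)
    (hdeg : f n ≠ 0) (hdeg' : ∀ i : ℕ, n < i → f i = 0)
    (i : ℕ) (hi1 : n - min (nlt n k) qk * qk ^ (k - 1) < i) (hi2 : i < n) (hi : f i ≠ 0) :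
    ¬ ∃ g h : ArithmeticFunction R, IsDP g ∧ IsDP h ∧ Nonconst g ∧ f = g ^ k * h := by
  rintro ⟨g, h, hg, hh, ⟨j, hj2, hj⟩, rfl⟩
  obtain ⟨m, hjm, hgm⟩ := exists_hasGap hg hj
  have hm2 : 2 ≤ m := hj2.trans hjm
  have hh0 : ∃ t, h t ≠ 0 := by
    by_contra! h0
    have : h = 0 := ArithmeticFunction.ext fun t => by simp [h0 t]
    exact hdeg (by simp [this])
  obtain ⟨t, ht⟩ := hh0
  obtain ⟨l, -, hhl⟩ := exists_hasGap hh ht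
  obtain ⟨k, rfl⟩ : ∃ k', k = k' + 1 := ⟨k - 1, by omega⟩
  rw [Nat.add_sub_cancel] at hi1
  have hl := hhl.pos
  have hgap : HasGap (g ^ (k + 1) * h) (m ^ (k + 1) * l) (min l m * m ^ k) := by
    refine (hgm.pow k).mul hhl ?_ ?_ ?_
    · have : 0 < min l m := lt_min hl (by omega)
      positivity
    · rw [mul_comm]
      exact Nat.mul_le_mul_left _ (min_le_left _ _)
    · rw [one_mul, pow_succ']
      exact Nat.mul_le_mul_right _ (min_le_right _ _)
  have hN := hgap.eq_of_degree hdeg hdeg'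
  have hn : n ≠ 0 := by omega
  have hmn : m ^ (k + 1) ∣ n := ⟨l, hN.symm⟩
  have hqm : qk ≤ m := by
    obtain ⟨p, hp, hpm⟩ := Nat.exists_prime_and_dvd (show m ≠ 1 by omega)
    exact (hqkmin p hp ((pow_dvd_pow_of_dvd hpm _).trans hmn)).trans
      (Nat.le_of_dvd (by omega) hpm)
  have hnl : nlt n (k + 1) ≤ l := by
    refine Nat.le_of_dvd hl (((nlt_coprime hn hmn).pow_right (k + 1)).dvd_of_dvd_mul_left ?_)
    rw [hN]
    exact nlt_dvd hn _
  have hle : min (nlt n (k + 1)) qk * qk ^ k ≤ min l m * m ^ k := by gcongr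
  have hgi := hgap.2.2 i (by omega) hi
  omega

end DirichletPoly
end

section
/- Let R be a unique factorization domain, let f be a primitive Dirichlet polynomial over R (the gcd of its coefficients is a unit of R) of degree n ≥ 2 with n not square-free, and fix an arbitrary integer m ≥ 2. Then the following are equivalent: (i) f is square-free, i.e., there is no nonconstant Dirichlet polynomial g over R such that g·g divides f in the ring of Dirichlet polynomials over R; (ii) for every prime number p with p² ∣ n and every nonzero Dirichlet polynomial g over R of degree at most n/p, f does not divide g^m; (iii) for every prime number p with p² ∣ n and every Dirichlet polynomial g over R of degree exactly n/p, f does not divide g^m. -/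
/-!
Reading the prime `p` as a variable identifies the ring of Dirichlet polynomials over `R` with the
polynomial ring over `R` in variables indexed by the primes: `1/i^s` corresponds to the monomial
whose exponent vector is the factorization of `i` (`fac`). The identification is `ofMv`, an
injective multiplicative map whose range consists of the Dirichlet polynomials
(`ofMv_injective`, `ofMv_mul`, `exists_ofMv`). In particular this ring is a unique factorization
domain.

If `f` is square-free and primitive, then the corresponding polynomial is square-free in the usual
sense, since a constant dividing it divides every coefficient and is therefore a unit
(`squarefree_of_squarefreeDP`). In a unique factorization domain a square-free element that divides
`g ^ m` divides `g`, and this is impossible when `0 ≠ g` has degree at most `n / p < n`.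

Conversely, let `f = g * g * c` with `g` of degree `d ≥ 2`, and let `p` be a prime factor of `d`.
Then `p ^ 2 ∣ n`, the product `g * c` has degree `n / d`, and multiplying it by the Dirichlet
monomial of degree `d / p` gives a Dirichlet polynomial of degree exactly `n / p`. Its square is a
multiple of `(g * c) ^ 2 = f * c`, so `f` divides its `m`-th power for all `m ≥ 2`.
-/

namespace DirichletPoly

variable {R : Type*}

/-- Divisibility in the ring of Dirichlet polynomials: `DvdDP f h` means `f` divides `h`
with a quotient that is itself a Dirichlet polynomial (has finite support). -/
def DvdDP [CommSemiring R] (f h : ArithmeticFunction R) : Prop :=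
  ∃ c : ArithmeticFunction R, IsDP c ∧ h = f * c

/-- `f` is square-free: no square of a nonconstant Dirichlet polynomial divides it. -/
def SquarefreeDP [CommSemiring R] (f : ArithmeticFunction R) : Prop :=
  ¬ ∃ g : ArithmeticFunction R, IsDP g ∧ Nonconst g ∧ DvdDP (g * g) f

/-- The factorization of `n`, as an exponent vector indexed by the subtype of primes. -/
noncomputable def fac (n : ℕ) : Nat.Primes →₀ ℕ :=
  n.factorization.comapDomain Subtype.val Subtype.val_injective.injOn

lemma fac_apply (n : ℕ) (p : Nat.Primes) : fac n p = n.factorization p := rfl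

lemma fac_mul {a b : ℕ} (ha : a ≠ 0) (hb : b ≠ 0) : fac (a * b) = fac a + fac b := by
  ext p
  simp [fac_apply, Nat.factorization_mul ha hb]

lemma fac_inj {a b : ℕ} (ha : a ≠ 0) (hb : b ≠ 0) (h : fac a = fac b) : a = b := by
  refine Nat.eq_of_factorization_eq ha hb fun p => ?_
  by_cases hp : p.Prime
  · exact DFunLike.congr_fun h (⟨p, hp⟩ : Nat.Primes)
  · simp [Nat.factorization_eq_zero_of_not_prime _ hp]

lemma exists_fac (u : Nat.Primes →₀ ℕ) : ∃ a : ℕ, a ≠ 0 ∧ fac a = u := by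
  induction u using Finsupp.induction_linear with
  | zero => exact ⟨1, one_ne_zero, by ext p; simp [fac_apply]⟩
  | add u v hu hv =>
    obtain ⟨a, ha, rfl⟩ := hu
    obtain ⟨b, hb, rfl⟩ := hv
    exact ⟨a * b, mul_ne_zero ha hb, fac_mul ha hb⟩
  | single p k =>
    refine ⟨(p : ℕ) ^ k, pow_ne_zero _ p.2.ne_zero, ?_⟩
    ext q
    rw [fac_apply, p.2.factorization_pow]
    simp [Finsupp.single_apply, Nat.Primes.coe_nat_inj]

/-- The Dirichlet polynomial of a polynomial in variables indexed by the primes: its coefficient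
at `n ≠ 0` is that of the monomial with exponent vector the factorization of `n`. The value at `0`
is set separately because `fac 0 = fac 1`. -/
noncomputable def ofMv [CommRing R] (P : MvPolynomial Nat.Primes R) : ArithmeticFunction R :=
  ⟨fun n => if n = 0 then 0 else P.coeff (fac n), by simp⟩

lemma ofMv_apply [CommRing R] (P : MvPolynomial Nat.Primes R) {n : ℕ} (hn : n ≠ 0) :
    ofMv P n = P.coeff (fac n) := by
  change (if n = 0 then 0 else P.coeff (fac n)) = _
  rw [if_neg hn]

lemma ofMv_injective [CommRing R] : Function.Injective (ofMv (R := R)) := by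
  intro P Q h
  ext u
  obtain ⟨a, ha, rfl⟩ := exists_fac u
  rw [← ofMv_apply P ha, ← ofMv_apply Q ha, h]

lemma ofMv_mul [CommRing R] (P Q : MvPolynomial Nat.Primes R) :
    ofMv (P * Q) = ofMv P * ofMv Q := by
  classical
  ext n
  by_cases hn : n = 0
  · subst hn; simp
  rw [ofMv_apply _ hn, ArithmeticFunction.mul_apply, MvPolynomial.coeff_mul]
  symm
  refine Finset.sum_nbij (fun x => (fac x.1, fac x.2)) ?_ ?_ ?_ ?_
  · rintro ⟨a, b⟩ h
    obtain ⟨rfl, -⟩ := Nat.mem_divisorsAntidiagonal.1 h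
    simp [fac_mul (left_ne_zero_of_mul hn) (right_ne_zero_of_mul hn)]
  · rintro ⟨a, b⟩ h ⟨a', b'⟩ h' e
    have h1 := (Nat.mem_divisorsAntidiagonal.1 h).1
    have h2 := (Nat.mem_divisorsAntidiagonal.1 h').1
    have k1 : a * b ≠ 0 := by simpa [h1] using hn
    have k2 : a' * b' ≠ 0 := by simpa [h2] using hn
    simp only [Prod.mk.injEq] at e
    rw [fac_inj (left_ne_zero_of_mul k1) (left_ne_zero_of_mul k2) e.1,
      fac_inj (right_ne_zero_of_mul k1) (right_ne_zero_of_mul k2) e.2]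
  · rintro ⟨u, v⟩ h
    obtain ⟨a, ha, rfl⟩ := exists_fac u
    obtain ⟨b, hb, rfl⟩ := exists_fac v
    have h1 : fac a + fac b = fac n := by simpa using h
    rw [← fac_mul ha hb] at h1
    exact ⟨(a, b), by simp [fac_inj (mul_ne_zero ha hb) hn h1, hn], rfl⟩
  · rintro ⟨a, b⟩ h
    obtain ⟨rfl, -⟩ := Nat.mem_divisorsAntidiagonal.1 h
    rw [ofMv_apply _ (left_ne_zero_of_mul hn), ofMv_apply _ (right_ne_zero_of_mul hn)]

lemma ofMv_one [CommRing R] : ofMv (1 : MvPolynomial Nat.Primes R) = 1 := by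
  classical
  have h1 : fac 1 = 0 := by ext p; simp [fac_apply]
  ext n
  by_cases hn : n = 0
  · subst hn; simp
  rw [ofMv_apply _ hn, MvPolynomial.coeff_one, ArithmeticFunction.one_apply, ← h1]
  exact if_congr ⟨fun h => (fac_inj one_ne_zero hn h).symm, fun h => by rw [h]⟩ rfl rfl

lemma ofMv_pow [CommRing R] (P : MvPolynomial Nat.Primes R) (m : ℕ) :
    ofMv (P ^ m) = ofMv P ^ m := by
  induction m with
  | zero => simp [ofMv_one]
  | succ k ih => rw [pow_succ, pow_succ, ofMv_mul, ih]

lemma isDP_ofMv [CommRing R] (P : MvPolynomial Nat.Primes R) : IsDP (ofMv P) := by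
  have hne : ∀ n ∈ Function.support (ofMv P), n ≠ 0 := by
    rintro n hn rfl
    simp at hn
  refine Set.Finite.of_finite_image (f := fac) (P.support.finite_toSet.subset ?_) ?_
  · rintro _ ⟨n, hn, rfl⟩
    have h : ofMv P n ≠ 0 := hn
    rw [ofMv_apply _ (hne n hn)] at h
    simpa using h
  · exact fun a ha b hb h => fac_inj (hne a ha) (hne b hb) h

lemma exists_ofMv [CommRing R] {f : ArithmeticFunction R} (hf : IsDP f) :
    ∃ P, ofMv P = f := by
  classical
  replace hf : (Function.support ⇑f).Finite := hf
  refine ⟨∑ i ∈ hf.toFinset, MvPolynomial.monomial (fac i) (f i), ?_⟩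
  ext n
  by_cases hn : n = 0
  · subst hn; simp
  rw [ofMv_apply _ hn, MvPolynomial.coeff_sum]
  simp only [MvPolynomial.coeff_monomial]
  rw [Finset.sum_eq_single n]
  · simp
  · intro b hb hbn
    have hb0 : b ≠ 0 := by rintro rfl; simp at hb
    exact if_neg fun h => hbn (fac_inj hb0 hn h)
  · intro h
    simpa using h

lemma dvdDP_ofMv [CommRing R] {P Q : MvPolynomial Nat.Primes R} :
    DvdDP (ofMv P) (ofMv Q) ↔ P ∣ Q := by
  constructor
  · rintro ⟨c, hc, h⟩
    obtain ⟨C, rfl⟩ := exists_ofMv hc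
    rw [← ofMv_mul] at h
    exact ⟨C, ofMv_injective h⟩
  · rintro ⟨C, rfl⟩
    exact ⟨ofMv C, isDP_ofMv C, ofMv_mul P C⟩

/-- `f` is nonzero of degree `n`. -/
def HasDeg [Zero R] (f : ArithmeticFunction R) (n : ℕ) : Prop :=
  f n ≠ 0 ∧ ∀ i : ℕ, n < i → f i = 0

lemma HasDeg.unique [Zero R] {f : ArithmeticFunction R} {a b : ℕ} (ha : HasDeg f a)
    (hb : HasDeg f b) : a = b := by
  rcases lt_trichotomy a b with h | h | h
  · exact absurd (ha.2 b h) hb.1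
  · exact h
  · exact absurd (hb.2 a h) ha.1

lemma HasDeg.pos [Zero R] {f : ArithmeticFunction R} {a : ℕ} (ha : HasDeg f a) : a ≠ 0 := by
  rintro rfl
  exact ha.1 (by simp)

lemma exists_hasDeg [Zero R] {f : ArithmeticFunction R} (hf : IsDP f) (h0 : f ≠ 0) :
    ∃ n, HasDeg f n := by
  replace hf : (Function.support ⇑f).Finite := hf
  have hne : hf.toFinset.Nonempty := by
    rw [Set.Finite.toFinset_nonempty]
    by_contra h
    rw [Set.not_nonempty_iff_eq_empty, Function.support_eq_empty_iff] at h
    exact h0 (by ext n; simp [h])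
  refine ⟨hf.toFinset.max' hne, ?_, fun i hi => ?_⟩
  · simpa using hf.toFinset.max'_mem hne
  · by_contra h
    exact absurd (hf.toFinset.le_max' i (by simpa using h)) (not_le.2 hi)

lemma HasDeg.mul [CommRing R] [IsDomain R] {f g : ArithmeticFunction R} {a b : ℕ}
    (hf : HasDeg f a) (hg : HasDeg g b) : HasDeg (f * g) (a * b) := by
  have ha := Nat.pos_of_ne_zero hf.pos
  have hb := Nat.pos_of_ne_zero hg.pos
  constructor
  · rw [ArithmeticFunction.mul_apply, Finset.sum_eq_single (a, b)]
    · exact mul_ne_zero hf.1 hg.1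
    · rintro ⟨x, y⟩ h hne
      have h1 : x * y = a * b := (Nat.mem_divisorsAntidiagonal.1 h).1
      rcases lt_trichotomy a x with hx | rfl | hx
      · simp [hf.2 x hx]
      · exact absurd (by rw [Nat.eq_of_mul_eq_mul_left ha h1]) hne
      · have hy : b < y := by
          by_contra! hy
          nlinarith [Nat.mul_le_mul_left x hy]
        simp [hg.2 y hy]
    · intro h
      simp [ha.ne', hb.ne'] at h
  · intro i hi
    rw [ArithmeticFunction.mul_apply]
    refine Finset.sum_eq_zero ?_
    rintro ⟨x, y⟩ h
    have h1 : x * y = i := (Nat.mem_divisorsAntidiagonal.1 h).1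
    by_cases hx : a < x
    · simp [hf.2 x hx]
    · have hy : b < y := by
        by_contra! hy
        have := Nat.mul_le_mul (not_lt.1 hx) hy
        omega
      simp [hg.2 y hy]

lemma hasDeg_monomial [CommRing R] [IsDomain R] {k : ℕ} (hk : k ≠ 0) :
    HasDeg (ofMv (MvPolynomial.monomial (fac k) (1 : R))) k := by
  classical
  constructor
  · rw [ofMv_apply _ hk]; simp
  · intro i hi
    have hi0 : i ≠ 0 := by omega
    rw [ofMv_apply _ hi0, MvPolynomial.coeff_monomial, if_neg]
    exact fun h => hi.ne (fac_inj hk hi0 h)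

/-- A primitive Dirichlet polynomial without nonconstant square factors is square-free as an
element of the ring, because its constant factors are units. -/
lemma squarefree_of_squarefreeDP [CommRing R] {F : MvPolynomial Nat.Primes R}
    (hprim : ∀ d : R, (∀ i : ℕ, d ∣ ofMv F i) → IsUnit d) (h : SquarefreeDP (ofMv F)) :
    Squarefree F := by
  intro P hP
  have hc : ¬ Nonconst (ofMv P) := fun hn =>
    h ⟨ofMv P, isDP_ofMv P, hn, by rw [← ofMv_mul]; exact dvdDP_ofMv.2 hP⟩
  have hPC : P = MvPolynomial.C (P.coeff 0) := by
    classical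
    ext u
    obtain ⟨a, ha, rfl⟩ := exists_fac u
    rw [MvPolynomial.coeff_C]
    split_ifs with h0
    · rw [h0]
    · rw [← ofMv_apply P ha]
      by_contra hne
      refine hc ⟨a, ?_, hne⟩
      have : a ≠ 1 := by
        rintro rfl
        exact h0 (by ext p; simp [fac_apply])
      omega
  rw [hPC]
  refine (hprim _ fun i => ?_).map MvPolynomial.C
  by_cases hi : i = 0
  · subst hi; simp
  rw [ofMv_apply _ hi]
  refine MvPolynomial.C_dvd_iff_dvd_coeff _ _ |>.1 ?_ _
  rw [← hPC]
  exact (dvd_mul_right P P).trans hP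

lemma not_dvdDP_of_squarefreeDP [CommRing R] [IsDomain R] [UniqueFactorizationMonoid R]
    {f g : ArithmeticFunction R} (hf : IsDP f) (hg : IsDP g)
    (hprim : ∀ d : R, (∀ i : ℕ, d ∣ f i) → IsUnit d) {n k m : ℕ} (hn : HasDeg f n) (hk : k < n)
    (h0 : g ≠ 0) (hgk : ∀ i : ℕ, k < i → g i = 0) (h : SquarefreeDP f) :
    ¬ DvdDP f (g ^ m) := by
  intro hd
  obtain ⟨F, rfl⟩ := exists_ofMv hf
  obtain ⟨G, rfl⟩ := exists_ofMv hg
  rw [← ofMv_pow, dvdDP_ofMv] at hd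
  obtain ⟨c, hc, e⟩ :=
    dvdDP_ofMv.2 ((squarefree_of_squarefreeDP hprim h).isRadical m G hd)
  have hc0 : c ≠ 0 := by
    rintro rfl
    exact h0 (by simpa using e)
  obtain ⟨l, hl⟩ := exists_hasDeg hc hc0
  have h1 := hn.mul hl
  rw [← e] at h1
  have : n ≤ n * l := Nat.le_mul_of_pos_right n (Nat.pos_of_ne_zero hl.pos)
  exact h1.1 (hgk _ (by omega))

lemma exists_of_not_squarefreeDP [CommRing R] [IsDomain R]
    {f : ArithmeticFunction R} {n m : ℕ} (hn : HasDeg f n) (hm : 2 ≤ m)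
    (h : ¬ SquarefreeDP f) :
    ∃ p : ℕ, p.Prime ∧ p ^ 2 ∣ n ∧ ∃ g : ArithmeticFunction R, IsDP g ∧
      HasDeg g (n / p) ∧ DvdDP f (g ^ m) := by
  obtain ⟨g, hg, ⟨i, hi, hgi⟩, c, hc, rfl⟩ := not_not.1 h
  have hg0 : g ≠ 0 := by rintro rfl; simp at hgi
  have hc0 : c ≠ 0 := by
    rintro rfl
    exact hn.1 (by simp)
  obtain ⟨d, hd⟩ := exists_hasDeg hg hg0
  obtain ⟨l, hl⟩ := exists_hasDeg hc hc0
  obtain rfl := hn.unique ((hd.mul hd).mul hl)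
  have hid : i ≤ d := by
    by_contra! hlt
    exact hgi (hd.2 i hlt)
  obtain ⟨p, hp, k, rfl⟩ := Nat.exists_prime_and_dvd (show d ≠ 1 by omega)
  have hk : k ≠ 0 := right_ne_zero_of_mul hd.pos
  obtain ⟨G, rfl⟩ := exists_ofMv hg
  obtain ⟨C, rfl⟩ := exists_ofMv hc
  refine ⟨p, hp, ⟨k * k * l, by ring⟩,
    ofMv (G * C * MvPolynomial.monomial (fac k) 1), isDP_ofMv _, ?_, ?_⟩
  · have e : p * k * (p * k) * l / p = p * k * l * k := by
      rw [show p * k * (p * k) * l = p * (p * k * l * k) by ring, Nat.mul_div_cancel_left _ hp.pos]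
    rw [e, ofMv_mul, ofMv_mul]
    exact (hd.mul hl).mul (hasDeg_monomial hk)
  · rw [← ofMv_mul, ← ofMv_mul, ← ofMv_pow, dvdDP_ofMv]
    refine Dvd.dvd.trans ?_ (pow_dvd_pow _ hm)
    exact ⟨C * MvPolynomial.monomial (fac k) 1 ^ 2, by ring⟩

/-- square-freeness criterion without derivatives. -/
theorem squarefree_tfae
    [CommRing R] [IsDomain R] [UniqueFactorizationMonoid R]
    (f : ArithmeticFunction R) (hfin : IsDP f)
    (hprim : ∀ d : R, (∀ i : ℕ, d ∣ f i) → IsUnit d)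
    (n : ℕ) (hn2 : 2 ≤ n) (hnsf : ¬ Squarefree n)
    (hdeg : f n ≠ 0) (hdeg' : ∀ i : ℕ, n < i → f i = 0)
    (m : ℕ) (hm : 2 ≤ m) :
    (SquarefreeDP f ↔
      ∀ p : ℕ, p.Prime → p ^ 2 ∣ n → ∀ g : ArithmeticFunction R, IsDP g → g ≠ 0 →
        (∀ i : ℕ, n / p < i → g i = 0) → ¬ DvdDP f (g ^ m)) ∧
    (SquarefreeDP f ↔
      ∀ p : ℕ, p.Prime → p ^ 2 ∣ n → ∀ g : ArithmeticFunction R, IsDP g →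
        g (n / p) ≠ 0 → (∀ i : ℕ, n / p < i → g i = 0) → ¬ DvdDP f (g ^ m)) := by
  have hn : HasDeg f n := ⟨hdeg, hdeg'⟩
  have ne_zero : ∀ (g : ArithmeticFunction R) (k : ℕ), g k ≠ 0 → g ≠ 0 := by
    rintro g k hk rfl
    simp at hk
  have hlt : ∀ p : ℕ, p.Prime → n / p < n := fun p hp => Nat.div_lt_self (by omega) hp.one_lt
  refine ⟨⟨fun h p hp _ g hg h0 hgk =>
    not_dvdDP_of_squarefreeDP hfin hg hprim hn (hlt p hp) h0 hgk h, fun h => ?_⟩,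
    ⟨fun h p hp _ g hg h0 hgk =>
    not_dvdDP_of_squarefreeDP hfin hg hprim hn (hlt p hp) (ne_zero g _ h0) hgk h, fun h => ?_⟩⟩
  · by_contra hs
    obtain ⟨p, hp, hpn, g, hg, hgd, hd⟩ := exists_of_not_squarefreeDP hn hm hs
    exact h p hp hpn g hg (ne_zero g _ hgd.1) hgd.2 hd
  · by_contra hs
    obtain ⟨p, hp, hpn, g, hg, hgd, hd⟩ := exists_of_not_squarefreeDP hn hm hs
    exact h p hp hpn g hg hgd.1 hgd.2 hd

end DirichletPoly
end
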